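/- Let d ≥ 3 and ε ∈ (0,1), fix 1 ≤ r_N ≤ N^{1−ε}, and let A = B(0,r_N) ⊆ B = B(0,N^{1−ε/2}) in T. There exist constants c, c′ > 0 depending only on d and ε such that for all sufficiently large N: sup_{x ∈ ∂_i A} | P_σ[ Y_{H_A} = x ] · cap(𝖠) / e_A(x) − 1 | ≤ c N^{−c′}, where ∂_i A is the internal boundary of A, σ is the quasistationary distribution on T∖B, 𝖠 = φ(A), and e_A(x) = e_𝖠(φ(x)). -/

import Mathlib

open MeasureTheory Filter Classical
open scoped ENNReal NNReal

noncomputable section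

namespace Frag

/-! ### Graph-theoretic basics -/

/-- Two vertices of `Fin d → R` are adjacent if they differ in exactly one
coordinate, by `±1` (Euclidean distance one). -/
def adj {d : ℕ} {R : Type*} [AddGroupWithOne R] (x y : Fin d → R) : Prop :=
  x ≠ y ∧ ∃ i : Fin d, (y i = x i + 1 ∨ x i = y i + 1) ∧ ∀ j : Fin d, j ≠ i → x j = y j

/-- The discrete torus `(ℤ/Nℤ)^d`. -/
abbrev Torus (d N : ℕ) := Fin d → ZMod N

/-- The lattice `ℤ^d`. -/
abbrev Lat (d : ℕ) := Fin d → ℤ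

instance (n : ℕ) : MeasurableSpace (ZMod n) := ⊤

/-- The `ℓ∞`-distance on the torus. -/
def torusDist {d N : ℕ} (x y : Torus d N) : ℕ :=
  Finset.univ.sup fun i : Fin d => min (x i - y i).val (y i - x i).val

/-- The `ℓ∞`-distance on the lattice. -/
def latDist {d : ℕ} (x y : Lat d) : ℕ :=
  Finset.univ.sup fun i : Fin d => (x i - y i).natAbs

/-- Closed `ℓ∞`-ball in the torus. -/
def torusBall {d N : ℕ} (x : Torus d N) (r : ℝ) : Set (Torus d N) :=
  {y | (torusDist x y : ℝ) ≤ r}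

/-- Closed `ℓ∞`-ball in the lattice. -/
def latBall {d : ℕ} (x : Lat d) (r : ℝ) : Set (Lat d) :=
  {y | (latDist x y : ℝ) ≤ r}

/-- `x` and `y` are connected by a nearest-neighbour path staying in `S`. -/
def connectedIn {α : Type*} (rel : α → α → Prop) (S : Set α) (x y : α) : Prop :=
  ∃ (n : ℕ) (p : ℕ → α), p 0 = x ∧ p n = y ∧ (∀ k, k ≤ n → p k ∈ S) ∧
    ∀ k, k < n → rel (p k) (p (k + 1))

/-- The connected component of `x` inside `S`. -/
def compOf {α : Type*} (rel : α → α → Prop) (S : Set α) (x : α) : Set α :=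
  {y | connectedIn rel S x y}

/-- `S` is a connected set. -/
def IsConnSet {α : Type*} (rel : α → α → Prop) (S : Set α) : Prop :=
  ∀ x ∈ S, ∀ y ∈ S, connectedIn rel S x y

/-- External vertex boundary. -/
def extBdry {α : Type*} (rel : α → α → Prop) (S : Set α) : Set α :=
  {y | y ∉ S ∧ ∃ x ∈ S, rel x y}

/-- Internal vertex boundary. -/
def intBdry {α : Type*} (rel : α → α → Prop) (S : Set α) : Set α :=
  {x | x ∈ S ∧ ∃ y, y ∉ S ∧ rel x y}

/-- The cardinality of the largest connected component of `S`. -/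
def maxCompSize {α : Type*} (rel : α → α → Prop) (S : Set α) : ℕ :=
  sSup {n | ∃ x ∈ S, n = (compOf rel S x).ncard}

/-- The diameter of a set with respect to a distance. -/
def diamOf {α : Type*} (dist : α → α → ℕ) (S : Set α) : ℕ :=
  sSup {n | ∃ x ∈ S, ∃ y ∈ S, n = dist x y}

/-- The canonical graph isomorphism `φ` from `B(0, N/4) ⊆ (ℤ/Nℤ)^d` onto
`B(0, N/4) ⊆ ℤ^d`, given by the signed representative of each coordinate. -/
def torusToLat {d N : ℕ} (x : Torus d N) : Lat d :=
  fun i => if ((x i).val : ℝ) ≤ (N : ℝ) / 2 then ((x i).val : ℤ) else ((x i).val : ℤ) - (N : ℤ)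

/-! ### Discrete-time simple random walk -/

/-- One-step transition probability of the simple random walk. -/
def srwStep {d : ℕ} {R : Type*} [AddGroupWithOne R] (x y : Fin d → R) : ℝ≥0∞ :=
  if adj x y then ((2 * d : ℕ) : ℝ≥0∞)⁻¹ else 0

/-- `μ` is the law on path space of the discrete-time simple random walk with
initial distribution `init`, characterized by its cylinder probabilities. -/
def IsWalkLaw {d : ℕ} {R : Type*} [AddGroupWithOne R] [MeasurableSpace R]
    (μ : Measure (ℕ → (Fin d → R))) (init : (Fin d → R) → ℝ≥0∞) : Prop :=
  IsProbabilityMeasure μ ∧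
  ∀ (n : ℕ) (w : ℕ → (Fin d → R)),
    μ {ω | ∀ k, k ≤ n → ω k = w k} =
      init (w 0) * ∏ k ∈ Finset.range n, srwStep (w k) (w (k + 1))

/-- The uniform initial distribution on the torus. -/
def unifInit (d N : ℕ) : Torus d N → ℝ≥0∞ := fun _ => ((N : ℝ≥0∞) ^ d)⁻¹

/-- The initial distribution concentrated at `x`. -/
def pointInit {α : Type*} (x : α) : α → ℝ≥0∞ := fun y => if y = x then 1 else 0

/-- The set of sites visited in the first `t` steps. -/
def visited {α : Type*} (t : ℕ) (ω : ℕ → α) : Set α := {v | ∃ k, k ≤ t ∧ ω k = v}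

/-! ### Capacity and random interlacements on `ℤ^d` -/

/-- The event that the walk never returns to `V` after time `0`. -/
def escEvent {d : ℕ} (V : Set (Lat d)) : Set (ℕ → Lat d) :=
  {w | ∀ n, 1 ≤ n → w n ∉ V}

/-- `r` is the (simple random walk) capacity of `V ⊆ ℤ^d`:
`r = Σ_{x ∈ V} P_x[H̃_V = ∞]`. -/
def IsCap (d : ℕ) (V : Set (Lat d)) (r : ℝ) : Prop :=
  ∃ μ : Lat d → Measure (ℕ → Lat d),
    (∀ x, IsWalkLaw (μ x) (pointInit x)) ∧
    r = ∑ᶠ x ∈ V, ((μ x) (escEvent V)).toReal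

/-- `I` is a random interlacement at level `u` on the probability space `(Ω, P)`:
for every finite `V ⊆ ℤ^d`, `P[I ∩ V = ∅] = exp (−u · cap V)`. -/
def IsInterlacement (d : ℕ) (u : ℝ) {Ω : Type*} [MeasurableSpace Ω]
    (P : Measure Ω) (I : Ω → Set (Lat d)) : Prop :=
  IsProbabilityMeasure P ∧
  (∀ x : Lat d, MeasurableSet {ω | x ∈ I ω}) ∧
  ∀ V : Set (Lat d), V.Finite → ∀ r : ℝ, IsCap d V r →
    P {ω | ∀ x ∈ V, x ∉ I ω} = ENNReal.ofReal (Real.exp (-u * r))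

/-- `e = η(u)`, the probability that the origin lies in an infinite component of
the vacant set `V^u = ℤ^d ∖ I^u` of a random interlacement at level `u`. -/
def IsEta (d : ℕ) (u e : ℝ) : Prop :=
  ∃ (Ω : Type) (_ : MeasurableSpace Ω) (P : Measure Ω) (I : Ω → Set (Lat d)),
    IsInterlacement d u P I ∧
    e = (P {ω | (compOf adj ((I ω)ᶜ) (0 : Lat d)).Infinite}).toReal

/-- The critical level `u_* = inf {u ≥ 0 : η(u) = 0}`. -/
def uStar (d : ℕ) : ℝ := sInf {u | 0 ≤ u ∧ IsEta d u 0}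

/-- The probability of an event `E` about a random interlacement at level `u`. -/
def intProb (d : ℕ) (u : ℝ) (E : Set (Lat d) → Prop) : ℝ :=
  sSup {p | ∃ (Ω : Type) (_ : MeasurableSpace Ω) (P : Measure Ω) (I : Ω → Set (Lat d)),
    IsInterlacement d u P I ∧ p = (P {ω | E (I ω)}).toReal}

/-- The event that `B(0,L)` is connected to the external boundary of `B(0,2L)`
by a nearest-neighbour path in `S`. -/
def connAcross (d L : ℕ) (S : Set (Lat d)) : Prop :=
  ∃ x ∈ latBall (0 : Lat d) (L : ℝ), ∃ y ∈ extBdry adj (latBall (0 : Lat d) (2 * (L : ℝ))),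
    connectedIn adj S x y

/-- The critical level `u_** = inf {u ≥ 0 : α(u) > 0}`. -/
def uStarStar (d : ℕ) : ℝ :=
  sInf {u | 0 ≤ u ∧ ∃ a : ℝ, 0 < a ∧
    Tendsto (fun L : ℕ => (L : ℝ) ^ a * intProb d u fun I => connAcross d L Iᶜ)
      atTop (nhds 0)}

/-- `u` is a strongly supercritical level for random interlacements on `ℤ^d`. -/
def StronglySupercritical (d : ℕ) (u : ℝ) : Prop :=
  ∃ μ : ℝ, 0 < μ ∧
  ∃ (Ω : Type) (_ : MeasurableSpace Ω) (P : Measure Ω) (I : ℝ → Ω → Set (Lat d)),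
    (∀ v : ℝ, 0 ≤ v → IsInterlacement d v P (I v)) ∧
    (∀ v v' : ℝ, v ≤ v' → ∀ ω, I v ω ⊆ I v' ω) ∧
    ∃ N₀ : ℕ, ∀ N : ℕ, N₀ ≤ N →
      (1 - Real.exp (-(N : ℝ) ^ μ) ≤
        (P {ω | ∃ x ∈ latBall (0 : Lat d) (N : ℝ),
          (compOf adj ((I (u * (1 + μ)) ω)ᶜ) x).Infinite}).toReal) ∧
      (1 - Real.exp (-(N : ℝ) ^ μ) ≤
        (P {ω | ∀ S₁ S₂ : Set (Lat d),
            S₁ ⊆ (I (u * (1 - μ)) ω)ᶜ ∩ latBall 0 (N : ℝ) →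
            S₂ ⊆ (I (u * (1 - μ)) ω)ᶜ ∩ latBall 0 (N : ℝ) →
            IsConnSet adj S₁ → IsConnSet adj S₂ →
            (N : ℝ) / 8 ≤ (diamOf latDist S₁ : ℝ) →
            (N : ℝ) / 8 ≤ (diamOf latDist S₂ : ℝ) →
            ∃ x ∈ S₁, ∃ y ∈ S₂,
              connectedIn adj ((I (u * (1 + μ)) ω)ᶜ ∩ latBall 0 (2 * (N : ℝ))) x y}).toReal)

/-! ### Continuous-time walk -/

/-- Sample space for the continuous-time walk: a discrete path together with
the i.i.d. exponential interarrival gaps of the driving Poisson process. -/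
abbrev CTPath (d N : ℕ) := (ℕ → Torus d N) × (ℕ → ℝ)

/-- The number of jumps performed up to time `t`. -/
def nJumps (g : ℕ → ℝ) (t : ℝ) : ℕ := sSup {n | ∑ k ∈ Finset.range n, g k ≤ t}

/-- The position of the continuous-time walk at time `t`. -/
def ctPos {d N : ℕ} (ω : CTPath d N) (t : ℝ) : Torus d N := ω.1 (nJumps ω.2 t)

/-- `ν` is the law of an i.i.d. sequence of exponential random variables of
parameter `1`, characterized by its joint survival function. -/
def IsIIDExp (ν : Measure (ℕ → ℝ)) : Prop :=
  IsProbabilityMeasure ν ∧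
  ∀ (n : ℕ) (s : ℕ → ℝ), (∀ k, 0 ≤ s k) →
    ν {g | ∀ k, k ≤ n → s k < g k} =
      ENNReal.ofReal (Real.exp (-(∑ k ∈ Finset.range (n + 1), s k)))

/-- `P` is the law of the continuous-time simple random walk `Y_t = X_{N_t}`
with initial distribution `init`. -/
def IsCTWalk {d N : ℕ} (P : Measure (CTPath d N)) (init : Torus d N → ℝ≥0∞) : Prop :=
  ∃ (μ : Measure (ℕ → Torus d N)) (ν : Measure (ℕ → ℝ)),
    IsWalkLaw μ init ∧ IsIIDExp ν ∧ P = μ.prod ν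

/-- The entrance time `H_V = inf {t ≥ 0 : Y_t ∈ V}`. -/
def hitT {d N : ℕ} (V : Set (Torus d N)) (ω : CTPath d N) : ℝ :=
  sInf {t | 0 ≤ t ∧ ctPos ω t ∈ V}

/-- The entrance time to `V` after time `s`. -/
def hitTAfter {d N : ℕ} (V : Set (Torus d N)) (ω : CTPath d N) (s : ℝ) : ℝ :=
  sInf {t | s ≤ t ∧ ctPos ω t ∈ V}

/-- The exit time `T_V = inf {t ≥ 0 : Y_t ∉ V}`. -/
def exitT {d N : ℕ} (V : Set (Torus d N)) (ω : CTPath d N) : ℝ :=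
  sInf {t | 0 ≤ t ∧ ctPos ω t ∉ V}

/-- The regeneration time `t_* = (N log N)^2`. -/
def tstar (N : ℕ) : ℝ := ((N : ℝ) * Real.log N) ^ 2

/-- The first time `t ≥ s + t_*` such that the walk has avoided `B` during the
whole interval `[t − t_*, t]`. -/
def uEndAfter {d N : ℕ} (B : Set (Torus d N)) (ω : CTPath d N) (s : ℝ) : ℝ :=
  sInf {t | s + tstar N ≤ t ∧ ∀ r, t - tstar N ≤ r → r ≤ t → ctPos ω r ∉ B}

/-- The successive excursion times `(R_k, U_k)` between `A` and (long absences
from) `B`, with the convention `(R_0, U_0) = (0, 0)`. -/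
def excTimes {d N : ℕ} (A B : Set (Torus d N)) (ω : CTPath d N) : ℕ → ℝ × ℝ
  | 0 => (0, 0)
  | k + 1 =>
      let R := hitTAfter A ω (excTimes A B ω k).2
      (R, uEndAfter B ω R)

/-- The range of the continuous-time walk during the time interval `[a, b]`. -/
def ctRange {d N : ℕ} (ω : CTPath d N) (a b : ℝ) : Set (Torus d N) :=
  {v | ∃ t, a ≤ t ∧ t ≤ b ∧ ctPos ω t = v}

/-! ### The killed walk and the quasistationary distribution -/

/-- The action of the substochastic matrix `P^B` (walk killed on `B`) on a
vector `v`. -/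
def killedMul (d N : ℕ) (B : Set (Torus d N)) (v : Torus d N → ℝ) (x : Torus d N) : ℝ :=
  ∑ᶠ y : Torus d N, if y ∉ B ∧ adj x y then v y / (2 * d) else 0

/-- `l` is an eigenvalue of the killed transition matrix `P^B`. -/
def IsKilledEigenvalue (d N : ℕ) (B : Set (Torus d N)) (l : ℝ) : Prop :=
  ∃ v : Torus d N → ℝ, v ≠ 0 ∧ (∀ x ∈ B, v x = 0) ∧
    ∀ x, x ∉ B → killedMul d N B v x = l * v x

/-- `σ` is the quasistationary distribution on `T ∖ B`: the normalized
non-negative principal (Perron–Frobenius) eigenvector of `P^B`. -/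
def IsQSD (d N : ℕ) (B : Set (Torus d N)) (σ : Torus d N → ℝ) : Prop :=
  (∀ x, 0 ≤ σ x) ∧ (∀ x ∈ B, σ x = 0) ∧ (∑ᶠ x, σ x = 1) ∧
  ∃ l : ℝ, (∀ x, x ∉ B → killedMul d N B σ x = l * σ x) ∧
    ∀ l', IsKilledEigenvalue d N B l' → l' ≤ l

/-- The Dirichlet form of the simple random walk on the torus. -/
def dirichlet (d N : ℕ) (g : Torus d N → ℝ) : ℝ :=
  (1 / 2) * ∑ᶠ x : Torus d N, ∑ᶠ y : Torus d N,
    if adj x y then (g x - g y) ^ 2 / (2 * d * (N : ℝ) ^ d) else 0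

end Frag

namespace Frag

/-!
The law of the entrance point of the walk in `A` is `avg G` on `A`, where `G` is the Green function
of the walk killed on `A`. Since the initial distribution charges only the complement of `B`, the
lift of `G` to the lattice is, in a neighbourhood of `A` of radius comparable to `N ^ (1 - ε / 2)`,
nonnegative, zero on the copy of `A` and harmonic elsewhere. Filling `A` in harmonically changes `G`
little at the intermediate distance `N ^ (1 - 3 * ε / 4)`, because the walk is unlikely to return to
`A` from there, and Harnack's inequality with the gradient estimate shows that the filled-in
function is nearly constant up to that distance. By the maximum principle `G` is therefore near `A`
almost a multiple of the escape probability, so that the entrance law is almost a multiple of the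
equilibrium measure; as the entrance law has total mass one, the multiple is the inverse of the
capacity.
-/

/-! ### Averaging over neighbours -/

/-- The average of `w` over the `2d` neighbours of `x`, that is, the transition operator of the
simple random walk applied to `w`. -/
def avg {d : ℕ} {R : Type*} [AddGroupWithOne R] (w : (Fin d → R) → ℝ) (x : Fin d → R) : ℝ :=
  (∑ i : Fin d, (w (x + Pi.single i 1) + w (x - Pi.single i 1))) / (2 * d)

/-- `w` is harmonic on `D` for the simple random walk; only the vertices at which the mean value
property holds are required to lie in `D`. -/
def IsHarmonicOn {d : ℕ} {R : Type*} [AddGroupWithOne R] (w : (Fin d → R) → ℝ)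
    (D : Set (Fin d → R)) : Prop :=
  ∀ x ∈ D, avg w x = w x

section Avg

variable {d : ℕ} {R : Type*} [AddGroupWithOne R]

theorem adj_comm {x y : Fin d → R} : adj x y ↔ adj y x :=
  and_congr ne_comm (exists_congr fun _ => and_congr or_comm (forall₂_congr fun _ _ => eq_comm))

theorem adj_iff_exists_single [NeZero (1 : R)] {x y : Fin d → R} :
    adj x y ↔ ∃ i, y = x + Pi.single i 1 ∨ y = x - Pi.single i 1 := by
  have h1 : (1 : R) ≠ 0 := one_ne_zero
  constructor
  · rintro ⟨-, i, hi, hne⟩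
    refine ⟨i, hi.imp (fun hi => ?_) fun hi => ?_⟩ <;> ext j <;> obtain rfl | hj := eq_or_ne j i
    · simpa using hi
    · simp [hj, hne j hj]
    · simp [hi]
    · simp [hj, hne j hj]
  · rintro ⟨i, rfl | rfl⟩
    · exact ⟨by simp, i, Or.inl (by simp), fun j hj => by simp [hj]⟩
    · refine ⟨fun h => h1 ?_, i, Or.inr (by simp), fun j hj => by simp [hj]⟩
      simpa using (congrFun h i).symm

theorem adj_add_single [NeZero (1 : R)] (x : Fin d → R) (i : Fin d) :
    adj x (x + Pi.single i 1) :=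
  adj_iff_exists_single.2 ⟨i, Or.inl rfl⟩

theorem adj_sub_single [NeZero (1 : R)] (x : Fin d → R) (i : Fin d) :
    adj x (x - Pi.single i 1) :=
  adj_iff_exists_single.2 ⟨i, Or.inr rfl⟩

theorem avg_mono_of_adj [NeZero (1 : R)] {v w : (Fin d → R) → ℝ} {x : Fin d → R}
    (h : ∀ y, adj x y → v y ≤ w y) : avg v x ≤ avg w x := by
  unfold avg
  gcongr with i
  · exact h _ (adj_add_single x i)
  · exact h _ (adj_sub_single x i)

theorem avg_congr_of_adj [NeZero (1 : R)] {v w : (Fin d → R) → ℝ} {x : Fin d → R}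
    (h : ∀ y, adj x y → v y = w y) : avg v x = avg w x :=
  (avg_mono_of_adj fun y hy => (h y hy).le).antisymm (avg_mono_of_adj fun y hy => (h y hy).ge)

theorem avg_mono {v w : (Fin d → R) → ℝ} (h : ∀ y, v y ≤ w y) (x : Fin d → R) :
    avg v x ≤ avg w x := by
  unfold avg
  gcongr <;> apply h

theorem avg_nonneg {w : (Fin d → R) → ℝ} (h : ∀ x, 0 ≤ w x) (x : Fin d → R) : 0 ≤ avg w x :=
  div_nonneg (Finset.sum_nonneg fun _ _ => add_nonneg (h _) (h _)) (by positivity)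

theorem avg_sub (v w : (Fin d → R) → ℝ) (x : Fin d → R) :
    avg (fun y => v y - w y) x = avg v x - avg w x := by
  simp only [avg, ← sub_div, ← Finset.sum_sub_distrib, add_sub_add_comm]

theorem avg_const_mul (c : ℝ) (w : (Fin d → R) → ℝ) (x : Fin d → R) :
    avg (fun y => c * w y) x = c * avg w x := by
  simp only [avg, mul_div_assoc', Finset.mul_sum, mul_add]

theorem avg_const (hd : 0 < d) (c : ℝ) (x : Fin d → R) : avg (fun _ => c) x = c := by
  have : (d : ℝ) ≠ 0 := by positivity
  simp only [avg, Finset.sum_const, Finset.card_univ, Fintype.card_fin, nsmul_eq_mul]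
  field_simp
  norm_num

theorem div_le_avg_of_adj [NeZero (1 : R)] {w : (Fin d → R) → ℝ} (h : ∀ x, 0 ≤ w x)
    {x y : Fin d → R} (hxy : adj x y) : w y / (2 * d) ≤ avg w x := by
  obtain ⟨i, hi⟩ := adj_iff_exists_single.1 hxy
  have hy : w y ≤ w (x + Pi.single i 1) + w (x - Pi.single i 1) := by
    rcases hi with rfl | rfl
    · exact le_add_of_nonneg_right (h _)
    · exact le_add_of_nonneg_left (h _)
  unfold avg
  gcongr
  exact hy.trans (Finset.single_le_sum
    (f := fun i : Fin d => w (x + Pi.single i 1) + w (x - Pi.single i 1))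
    (fun _ _ => add_nonneg (h _) (h _)) (Finset.mem_univ i))

theorem avg_comp_add_right {R : Type*} [AddCommGroupWithOne R] (w : (Fin d → R) → ℝ)
    (c x : Fin d → R) : avg (fun y => w (y + c)) x = avg w (x + c) := by
  simp only [avg, add_right_comm, sub_add_eq_add_sub]

theorem avg_sum_coord (φ : Fin d → ℤ → ℝ) (x : Lat d) :
    avg (fun y => ∑ j, φ j (y j)) x = ∑ j, φ j (x j) +
      (∑ j, (φ j (x j + 1) + φ j (x j - 1) - 2 * φ j (x j))) / (2 * d) := by
  obtain rfl | hd := Nat.eq_zero_or_pos d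
  · simp [avg]
  have sum_shift (i : Fin d) (t : ℤ) : ∑ j, φ j ((x + Pi.single i t : Lat d) j) =
      ∑ j, φ j (x j) + (φ i (x i + t) - φ i (x i)) := by
    rw [← sub_eq_iff_eq_add', ← Finset.sum_sub_distrib, Finset.sum_eq_single i]
    · simp
    · intro j _ hj
      simp [hj]
    · simp
  have sum_neighbours (i : Fin d) : ∑ j, φ j ((x + Pi.single i 1 : Lat d) j) +
      ∑ j, φ j ((x - Pi.single i 1 : Lat d) j) =
      2 * ∑ j, φ j (x j) + (φ i (x i + 1) + φ i (x i - 1) - 2 * φ i (x i)) := by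
    rw [sub_eq_add_neg x, ← Pi.single_neg, sum_shift, sum_shift, ← sub_eq_add_neg (x i)]
    ring
  simp only [avg, sum_neighbours, Finset.sum_add_distrib, Finset.sum_const, Finset.card_univ,
    Fintype.card_fin, nsmul_eq_mul]
  field_simp

end Avg

/-! ### The maximum principle -/

section MaximumPrinciple

variable {d : ℕ}

theorem avg_lt_of_adj {w : Lat d → ℝ} {x y : Lat d} {M : ℝ} (h : ∀ z, adj x z → w z ≤ M)
    (hxy : adj x y) (hy : w y < M) : avg w x < M := by
  obtain ⟨i, -⟩ := adj_iff_exists_single.1 hxy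
  have hgap := div_le_avg_of_adj (w := fun z => if adj x z then M - w z else 0)
    (fun z => by split_ifs with hz; exacts [sub_nonneg.2 (h z hz), le_rfl]) hxy
  rw [avg_congr_of_adj (w := fun z => M - w z) fun z hz => if_pos hz, avg_sub,
    avg_const i.pos, if_pos hxy] at hgap
  have : 0 < (M - w y) / (2 * d) := div_pos (sub_pos.2 hy) (mul_pos two_pos (Nat.cast_pos.2 i.pos))
  linarith

/-- At a maximal point that is furthest in some coordinate direction, the neighbour one step
further has a strictly smaller value. -/
theorem nonpos_of_le_avg {D : Set (Lat d)} (hD : D.Finite) {w : Lat d → ℝ}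
    (hw : ∀ x ∈ D, 0 < w x → w x ≤ avg w x)
    (hbd : ∀ x ∈ D, 0 < w x → ∀ y, adj x y → y ∉ D → w y ≤ 0) : ∀ x ∈ D, w x ≤ 0 := by
  by_contra! ⟨x₀, hx₀, hpos₀⟩
  obtain ⟨i⟩ : Nonempty (Fin d) := by
    by_contra hempty
    have : avg w x₀ = 0 := by simp [avg, not_nonempty_iff.1 hempty]
    linarith [hw x₀ hx₀ hpos₀]
  obtain ⟨y, hy, hymax⟩ := Set.exists_max_image D w hD ⟨x₀, hx₀⟩
  obtain ⟨z, ⟨hz, hzy⟩, hzmax⟩ := Set.exists_max_image {z | z ∈ D ∧ w z = w y} (fun z => z i)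
    (hD.subset fun z hz => hz.1) ⟨y, hy, rfl⟩
  have hpos : 0 < w z := hzy ▸ hpos₀.trans_le (hymax _ hx₀)
  have hle (u : Lat d) (hu : adj z u) : w u ≤ w z := by
    by_cases huD : u ∈ D
    · exact hzy ▸ hymax u huD
    · exact (hbd z hz hpos u hu huD).trans hpos.le
  have hlt : w (z + Pi.single i 1) < w z := by
    by_cases huD : z + Pi.single i 1 ∈ D
    · refine (hle _ (adj_add_single z i)).lt_of_ne fun heq => ?_
      have := hzmax _ ⟨huD, heq.trans hzy⟩
      simp at this
    · exact (hbd z hz hpos _ (adj_add_single z i) huD).trans_lt hpos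
  exact (hw z hz hpos).not_gt (avg_lt_of_adj hle (adj_add_single z i) hlt)

theorem le_of_le_avg_of_avg_le {D : Set (Lat d)} (hD : D.Finite) {v w : Lat d → ℝ}
    (hv : ∀ x ∈ D, v x ≤ avg v x) (hw : ∀ x ∈ D, avg w x ≤ w x)
    (hbd : ∀ x ∈ D, ∀ y, adj x y → y ∉ D → v y ≤ w y) : ∀ x ∈ D, v x ≤ w x := by
  have hle := nonpos_of_le_avg hD (w := fun x => v x - w x)
    (fun x hx _ => by rw [avg_sub]; linarith [hv x hx, hw x hx])
    fun x hx _ y hxy hy => sub_nonpos.2 (hbd x hx y hxy hy)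
  exact fun x hx => sub_nonpos.1 (hle x hx)

end MaximumPrinciple

/-! ### Cubes -/

section Cube

variable {d : ℕ}

/-- The `ℓ∞`-ball `B(0, L)` of `ℤ^d`, for an integer radius `L`. -/
def cube (d L : ℕ) : Set (Lat d) := {x | ∀ i, |x i| ≤ (L : ℤ)}

theorem finite_cube (L : ℕ) : (cube d L).Finite :=
  (Set.finite_Icc (fun _ : Fin d => -(L : ℤ)) (fun _ => (L : ℤ))).subset fun _ hx =>
    ⟨fun i => (abs_le.1 (hx i)).1, fun i => (abs_le.1 (hx i)).2⟩

theorem cube_mono {L L' : ℕ} (h : L ≤ L') : cube d L ⊆ cube d L' :=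
  fun _ hx i => (hx i).trans (by exact_mod_cast h)

theorem zero_mem_cube (L : ℕ) : (0 : Lat d) ∈ cube d L := fun i => by simp

theorem abs_sub_le_one_of_adj {x y : Lat d} (h : adj x y) (i : Fin d) : |y i - x i| ≤ 1 := by
  obtain ⟨-, k, hk, hne⟩ := h
  obtain rfl | hik := eq_or_ne i k
  · rw [abs_le]
    omega
  · simp [hne i hik]

theorem mem_cube_succ_of_adj {L : ℕ} {x y : Lat d} (hx : x ∈ cube d L) (h : adj x y) :
    y ∈ cube d (L + 1) := fun i => by
  have hstep := abs_le.1 (abs_sub_le_one_of_adj h i)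
  have hxi := abs_le.1 (hx i)
  rw [abs_le]
  push_cast
  constructor <;> linarith

end Cube

/-! ### Gradient estimate by reflection -/

section Gradient

variable {d : ℕ}

/-- The reflection of `ℤ^d` in the hyperplane `x i = m / 2`. -/
def reflect (i : Fin d) (m : ℤ) (x : Lat d) : Lat d := Function.update x i (m - x i)

theorem reflect_apply_of_ne {i j : Fin d} (h : j ≠ i) (m : ℤ) (x : Lat d) :
    reflect i m x j = x j := Function.update_of_ne h _ _

theorem reflect_apply_self (i : Fin d) (m : ℤ) (x : Lat d) : reflect i m x i = m - x i :=
  Function.update_self _ _ _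

theorem reflect_eq_iff {i : Fin d} {m : ℤ} {x y : Lat d} :
    reflect i m x = y ↔ m = x i + y i ∧ ∀ j, j ≠ i → x j = y j := by
  rw [reflect, Function.update_eq_iff, sub_eq_iff_eq_add']

theorem reflect_reflect (i : Fin d) (m : ℤ) (x : Lat d) : reflect i m (reflect i m x) = x := by
  simp [reflect]

theorem reflect_add_single_self (i : Fin d) (m t : ℤ) (x : Lat d) :
    reflect i m (x + Pi.single i t) = reflect i m x - Pi.single i t := by
  rw [reflect_eq_iff]
  refine ⟨?_, fun j hj => by simp [hj, reflect_apply_of_ne hj]⟩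
  simp only [Pi.add_apply, Pi.sub_apply, Pi.single_eq_same, reflect_apply_self]
  ring

theorem reflect_add_single_of_ne {i k : Fin d} (hk : k ≠ i) (m t : ℤ) (x : Lat d) :
    reflect i m (x + Pi.single k t) = reflect i m x + Pi.single k t := by
  rw [reflect_eq_iff]
  refine ⟨?_, fun j hj => by simp [reflect_apply_of_ne hj]⟩
  simp [reflect_apply_self, hk.symm]

theorem avg_comp_reflect (w : Lat d → ℝ) (i : Fin d) (m : ℤ) (x : Lat d) :
    avg (fun y => w (reflect i m y)) x = avg w (reflect i m x) := by
  unfold avg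
  congr 1
  refine Finset.sum_congr rfl fun k _ => ?_
  beta_reduce
  rw [sub_eq_add_neg x, ← Pi.single_neg]
  obtain rfl | hk := eq_or_ne k i
  · rw [reflect_add_single_self, reflect_add_single_self, Pi.single_neg, sub_neg_eq_add, add_comm]
  · rw [reflect_add_single_of_ne hk, reflect_add_single_of_ne hk, Pi.single_neg, ← sub_eq_add_neg]

theorem reflect_mem_cube {L K : ℕ} {i : Fin d} {m : ℤ} (hm : |m| ≤ L) {x : Lat d}
    (hx : x ∈ cube d K) : reflect i m x ∈ cube d (L + K) := fun j => by
  push_cast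
  obtain rfl | hj := eq_or_ne j i
  · rw [reflect_apply_self]
    exact (abs_sub _ _).trans (add_le_add hm (hx j))
  · rw [reflect_apply_of_ne hj]
    linarith [hx j, abs_nonneg m]

theorem reflect_eq_of_adj_of_cross {i : Fin d} {m : ℤ} {x z : Lat d} (h : adj x z)
    (hx : m < 2 * x i) (hz : 2 * z i ≤ m) : reflect i m z = z ∨ reflect i m z = x := by
  obtain ⟨-, k, hk, hne⟩ := h
  have hki : i = k := by
    by_contra hik
    have := hne i hik
    omega
  subst hki
  rcases hz.eq_or_lt with heq | hlt
  · exact Or.inl (reflect_eq_iff.2 ⟨by omega, fun _ _ => rfl⟩)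
  · exact Or.inr (reflect_eq_iff.2 ⟨by omega, fun j hj => (hne j hj).symm⟩)

/-- The contribution of the `j`-th coordinate, with value `t`, to `reflectBarrier`. -/
def reflectBarrierTerm (L : ℕ) (i : Fin d) (m : ℤ) (j : Fin d) (t : ℤ) : ℝ :=
  if j = i then 4 * d * (L + 1) * (2 * t - m + 2) - (d - 1) * (2 * t - m) ^ 2 else 4 * (t : ℝ) ^ 2

/-- The harmonic quadratic polynomial that controls, on the side `m < 2 * x i` of the reflection
hyperplane, the difference between a harmonic function on a cube and its reflection: it is at least
`4 * (L + 1) ^ 2` where the half-cube of radius `L` is left through its outer faces, and of order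
`L` near the hyperplane. -/
def reflectBarrier (L : ℕ) (i : Fin d) (m : ℤ) (x : Lat d) : ℝ :=
  ∑ j, reflectBarrierTerm L i m j (x j)

theorem avg_reflectBarrier (L : ℕ) (i : Fin d) (m : ℤ) (x : Lat d) :
    avg (reflectBarrier L i m) x = reflectBarrier L i m x := by
  have second_difference (j : Fin d) : reflectBarrierTerm L i m j (x j + 1) +
      reflectBarrierTerm L i m j (x j - 1) - 2 * reflectBarrierTerm L i m j (x j) =
      8 + if j = i then -(8 * d : ℝ) else 0 := by
    unfold reflectBarrierTerm
    split_ifs <;> push_cast <;> ring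
  unfold reflectBarrier
  rw [avg_sum_coord, add_eq_left, div_eq_zero_iff]
  left
  simp only [second_difference, Finset.sum_add_distrib, Finset.sum_ite_eq', Finset.sum_const,
    Finset.card_univ, Fintype.card_fin, nsmul_eq_mul, Finset.mem_univ, if_true]
  ring

section BarrierBounds

variable {L : ℕ} {i : Fin d} {m : ℤ} {z : Lat d}

theorem two_mul_sub_le_of_mem_cube (hm : |m| ≤ L) (hz : z ∈ cube d (L + 1)) :
    (2 * z i - m : ℝ) ≤ 3 * ((L : ℝ) + 1) := by
  have hm' := abs_le.1 hm
  have hzi := abs_le.1 (hz i)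
  have : 2 * z i - m ≤ 3 * ((L : ℤ) + 1) := by push_cast at hzi; linarith
  exact_mod_cast this

theorem reflectBarrierTerm_nonneg (hm : |m| ≤ L) (hz : z ∈ cube d (L + 1))
    (hzm : m - 1 ≤ 2 * z i) (j : Fin d) : 0 ≤ reflectBarrierTerm L i m j (z j) := by
  unfold reflectBarrierTerm
  split_ifs with hj
  · subst hj
    have hd : (1 : ℝ) ≤ d := by exact_mod_cast j.pos
    have lower : (-1 : ℝ) ≤ 2 * z j - m := by
      have : (-1 : ℤ) ≤ 2 * z j - m := by linarith
      exact_mod_cast this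
    have upper := two_mul_sub_le_of_mem_cube (i := j) hm hz
    generalize (2 * z j - m : ℝ) = s at lower upper ⊢
    have sq_le : s ^ 2 ≤ 3 * (L + 1) * (s + 2) := by
      rcases le_total 0 s with _ | _ <;> nlinarith
    have prod_nonneg : 0 ≤ (L + 1) * (s + 2) := mul_nonneg (by linarith) (by linarith)
    nlinarith [mul_le_mul_of_nonneg_left sq_le (sub_nonneg.2 hd),
      mul_nonneg (sub_nonneg.2 hd) prod_nonneg]
  · positivity

theorem reflectBarrier_nonneg (hm : |m| ≤ L) (hz : z ∈ cube d (L + 1)) (hzm : m - 1 ≤ 2 * z i) :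
    0 ≤ reflectBarrier L i m z :=
  Finset.sum_nonneg fun j _ => reflectBarrierTerm_nonneg hm hz hzm j

theorem le_reflectBarrierTerm_of_lt_abs (hm : |m| ≤ L) (hz : z ∈ cube d (L + 1))
    (hzm : m - 1 ≤ 2 * z i) {j : Fin d} (hj : (L : ℤ) < |z j|) :
    4 * ((L : ℝ) + 1) ^ 2 ≤ reflectBarrierTerm L i m j (z j) := by
  unfold reflectBarrierTerm
  split_ifs with hji
  · subst hji
    have hm' := abs_le.1 hm
    have hd : (1 : ℝ) ≤ d := by exact_mod_cast j.pos
    have lower : (L + 1 : ℝ) ≤ 2 * z j - m := by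
      have hzj : (L : ℤ) < z j := by rcases lt_abs.1 hj with h | h <;> linarith
      have : (L : ℤ) + 1 ≤ 2 * z j - m := by linarith
      exact_mod_cast this
    have upper := two_mul_sub_le_of_mem_cube (i := j) hm hz
    generalize (2 * z j - m : ℝ) = s at lower upper ⊢
    have sq_le : s ^ 2 ≤ 3 * (L + 1) * s := by nlinarith
    have le_prod : (L + 1 : ℝ) ^ 2 ≤ (L + 1) * s := by nlinarith
    have prod_le : 1 * ((L + 1) * s) ≤ d * ((L + 1) * s) := by gcongr; nlinarith
    nlinarith [mul_le_mul_of_nonneg_left sq_le (sub_nonneg.2 hd)]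
  · have : ((L : ℝ) + 1) ≤ |(z j : ℝ)| := by exact_mod_cast Int.add_one_le_iff.2 hj
    rw [← sq_abs (z j : ℝ)]
    gcongr

theorem le_reflectBarrier_of_notMem_cube (hm : |m| ≤ L) (hz : z ∈ cube d (L + 1))
    (hzm : m - 1 ≤ 2 * z i) (hzL : z ∉ cube d L) :
    4 * ((L : ℝ) + 1) ^ 2 ≤ reflectBarrier L i m z := by
  simp only [cube, Set.mem_ofPred_eq, not_forall, not_le] at hzL
  obtain ⟨j, hj⟩ := hzL
  exact (le_reflectBarrierTerm_of_lt_abs hm hz hzm hj).trans (Finset.single_le_sum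
    (fun k _ => reflectBarrierTerm_nonneg hm hz hzm k) (Finset.mem_univ j))

theorem reflectBarrierTerm_le {ρ : ℕ} (hρ : ρ ≤ L) (hz : z ∈ cube d ρ) (hm : m < 2 * z i)
    (hm' : 2 * z i - m ≤ ρ) (j : Fin d) : reflectBarrierTerm L i m j (z j) ≤
      4 * (L + 1) * ρ + if j = i then 12 * d * (L + 1) * (ρ : ℝ) else 0 := by
  have hρL : (ρ : ℝ) ≤ (L : ℝ) := by exact_mod_cast hρ
  unfold reflectBarrierTerm
  split_ifs with hj
  · subst hj
    have hd : (1 : ℝ) ≤ d := by exact_mod_cast j.pos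
    have lower : (1 : ℝ) ≤ 2 * z j - m := by exact_mod_cast (by omega : 1 ≤ 2 * z j - m)
    have upper : (2 * z j - m : ℝ) ≤ ρ := by exact_mod_cast hm'
    have linear_part : 4 * (d : ℝ) * (L + 1) * (2 * z j - m + 2) ≤ 4 * d * (L + 1) * (3 * ρ) := by
      gcongr
      linarith
    have square_part : 0 ≤ ((d : ℝ) - 1) * (2 * z j - m) ^ 2 :=
      mul_nonneg (by linarith) (sq_nonneg _)
    have : 0 ≤ 4 * ((L : ℝ) + 1) * ρ := by positivity
    linarith
  · have hzj : |(z j : ℝ)| ≤ ρ := by exact_mod_cast hz j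
    have : (z j : ℝ) ^ 2 ≤ (ρ : ℝ) ^ 2 := sq_le_sq' (abs_le.1 hzj).1 (abs_le.1 hzj).2
    have : (0 : ℝ) ≤ ρ := by positivity
    nlinarith

theorem reflectBarrier_le {ρ : ℕ} (hρ : ρ ≤ L) (hz : z ∈ cube d ρ) (hm : m < 2 * z i)
    (hm' : 2 * z i - m ≤ ρ) : reflectBarrier L i m z ≤ 16 * d * (L + 1) * ρ := by
  refine (Finset.sum_le_sum fun j _ => reflectBarrierTerm_le hρ hz hm hm' j).trans (le_of_eq ?_)
  rw [Finset.sum_add_distrib, Finset.sum_ite_eq']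
  simp only [Finset.sum_const, Finset.card_univ, Fintype.card_fin, nsmul_eq_mul, Finset.mem_univ,
    if_true]
  ring

end BarrierBounds

section BoundedHarmonic

variable {L : ℕ} {w : Lat d → ℝ} {M : ℝ}

/-- On the half-cube `{m < 2 * y i}` the difference of `w` and its reflection is harmonic, and it
can only be positive at the outer faces, because it is antisymmetric. -/
theorem sub_reflect_le (hw : IsHarmonicOn w (cube d (2 * L)))
    (hM : ∀ x ∈ cube d (2 * L + 1), w x ∈ Set.Icc 0 M) {i : Fin d} {m : ℤ} (hm : |m| ≤ L)
    {y : Lat d} (hy : y ∈ cube d L) (hym : m < 2 * y i) :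
    4 * ((L : ℝ) + 1) ^ 2 * (w y - w (reflect i m y)) ≤ M * reflectBarrier L i m y := by
  have hM0 : 0 ≤ M := (hM 0 (zero_mem_cube _)).1.trans (hM 0 (zero_mem_cube _)).2
  set F : Lat d → ℝ := fun x =>
    4 * ((L : ℝ) + 1) ^ 2 * (w x - w (reflect i m x)) - M * reflectBarrier L i m x with hF
  suffices ∀ x ∈ {x | x ∈ cube d L ∧ m < 2 * x i}, F x ≤ 0 from sub_nonpos.1 (this y ⟨hy, hym⟩)
  refine nonpos_of_le_avg ((finite_cube L).subset fun x hx => hx.1) ?_ ?_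
  · rintro x ⟨hx, -⟩ -
    have harm := hw x (cube_mono (by omega) hx)
    have harm_reflect := hw _ (two_mul L ▸ reflect_mem_cube (i := i) hm hx)
    rw [hF, avg_sub, avg_const_mul, avg_const_mul, avg_sub, avg_comp_reflect, harm, harm_reflect,
      avg_reflectBarrier]
  · rintro x ⟨hx, hxm⟩ hpos z hxz hz
    have hzL := mem_cube_succ_of_adj hx hxz
    have hzm : m - 1 ≤ 2 * z i := by
      have := (abs_le.1 (abs_sub_le_one_of_adj hxz i)).1
      omega
    have barrier_nonneg := mul_nonneg hM0 (reflectBarrier_nonneg hm hzL hzm)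
    by_cases hzc : z ∈ cube d L
    · suffices hG : w z - w (reflect i m z) ≤ 0 by
        have := mul_nonpos_of_nonneg_of_nonpos (by positivity : 0 ≤ 4 * ((L : ℝ) + 1) ^ 2) hG
        linarith
      rcases reflect_eq_of_adj_of_cross hxz hxm (not_lt.1 fun h => hz ⟨hzc, h⟩) with h | h
      · rw [h, sub_self]
      · have barrier_nonneg := mul_nonneg hM0
          (reflectBarrier_nonneg hm (cube_mono L.le_succ hx) (by linarith : m - 1 ≤ 2 * x i))
        have hxG : 0 < 4 * ((L : ℝ) + 1) ^ 2 * (w x - w z) := by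
          have hxz' : reflect i m x = z := h ▸ reflect_reflect i m z
          simp only [hF, hxz'] at hpos
          linarith
        linarith [pos_of_mul_pos_right hxG (by positivity), congrArg w h]
    · have barrier_large := mul_le_mul_of_nonneg_left
        (le_reflectBarrier_of_notMem_cube hm hzL hzm hzc) hM0
      have diff_le : w z - w (reflect i m z) ≤ M := by
        linarith [(hM _ (cube_mono (by omega) hzL)).2,
          (hM _ (cube_mono (by omega) (reflect_mem_cube (i := i) hm hzL))).1]
      have := mul_le_mul_of_nonneg_left diff_le (by positivity : 0 ≤ 4 * ((L : ℝ) + 1) ^ 2)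
      linarith

theorem abs_sub_reflect_le (hw : IsHarmonicOn w (cube d (2 * L)))
    (hM : ∀ x ∈ cube d (2 * L + 1), w x ∈ Set.Icc 0 M) {ρ : ℕ} (hρ : ρ ≤ L) {i : Fin d} {m : ℤ}
    {y : Lat d} (hy : y ∈ cube d ρ) (hm : |m| ≤ ρ) (hym : m < 2 * y i) (hym' : 2 * y i - m ≤ ρ) :
    |w y - w (reflect i m y)| ≤ 4 * d * M * ρ / (L + 1) := by
  have hM0 : 0 ≤ M := (hM 0 (zero_mem_cube _)).1.trans (hM 0 (zero_mem_cube _)).2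
  have hmL : |m| ≤ L := hm.trans (by exact_mod_cast hρ)
  have upper := sub_reflect_le hw hM hmL (cube_mono hρ hy) hym
  have lower := sub_reflect_le (w := fun x => M - w x)
    (fun x hx => by rw [avg_sub, avg_const i.pos, hw x hx])
    (fun x hx => ⟨sub_nonneg.2 (hM x hx).2, sub_le_self M (hM x hx).1⟩) hmL (cube_mono hρ hy) hym
  have habs : 4 * ((L : ℝ) + 1) ^ 2 * |w y - w (reflect i m y)| ≤ M * (16 * d * (L + 1) * ρ) := by
    refine le_trans ?_ (mul_le_mul_of_nonneg_left (reflectBarrier_le hρ hy hym hym') hM0)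
    rcases abs_cases (w y - w (reflect i m y)) with ⟨h, -⟩ | ⟨h, -⟩ <;> rw [h] <;> linarith
  rw [le_div_iff₀ (by positivity)]
  refine le_of_mul_le_mul_left ?_ (by positivity : 0 < 4 * ((L : ℝ) + 1))
  linarith

theorem abs_sub_update_zero_le (hw : IsHarmonicOn w (cube d (2 * L)))
    (hM : ∀ x ∈ cube d (2 * L + 1), w x ∈ Set.Icc 0 M) {ρ : ℕ} (hρ : ρ ≤ L) {y : Lat d}
    (hy : y ∈ cube d ρ) (i : Fin d) :
    |w y - w (Function.update y i 0)| ≤ 4 * d * M * ρ / (L + 1) := by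
  have hreflect : reflect i (y i) y = Function.update y i 0 := by simp [reflect]
  have hyi := abs_le.1 (hy i)
  rw [← hreflect]
  rcases lt_trichotomy (y i) 0 with hneg | hzero | hpos
  · have hz : reflect i (y i) y ∈ cube d ρ := fun j => by
      obtain rfl | hj := eq_or_ne j i
      · simp [reflect_apply_self]
      · simpa [reflect_apply_of_ne hj] using hy j
    rw [abs_sub_comm]
    simpa only [reflect_reflect] using abs_sub_reflect_le hw hM hρ (i := i) hz (hy i)
      (by rw [reflect_apply_self]; omega) (by rw [reflect_apply_self]; omega)
  · have hM0 : 0 ≤ M := (hM 0 (zero_mem_cube _)).1.trans (hM 0 (zero_mem_cube _)).2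
    rw [hreflect, ← hzero, Function.update_eq_self, sub_self, abs_zero]
    positivity
  · exact abs_sub_reflect_le hw hM hρ hy (hy i) (by omega) (by omega)

/-- The coordinates of `y` are set to zero one after the other. -/
theorem abs_sub_apply_zero_le (hw : IsHarmonicOn w (cube d (2 * L)))
    (hM : ∀ x ∈ cube d (2 * L + 1), w x ∈ Set.Icc 0 M) {ρ : ℕ} (hρ : ρ ≤ L) {y : Lat d}
    (hy : y ∈ cube d ρ) : |w y - w 0| ≤ 4 * d ^ 2 * M * ρ / (L + 1) := by
  have key (s : Finset (Fin d)) :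
      |w y - w (s.piecewise 0 y)| ≤ s.card * (4 * d * M * ρ / (L + 1)) := by
    induction s using Finset.induction_on with
    | empty => simp
    | insert i s hi ih =>
      have hz : s.piecewise 0 y ∈ cube d ρ := fun j => by
        by_cases hj : j ∈ s <;> simp [hj, hy j]
      have hstep := abs_sub_update_zero_le hw hM hρ hz i
      rw [Finset.piecewise_insert, Finset.card_insert_of_notMem hi]
      push_cast
      have := abs_sub_le (w y) (w (s.piecewise 0 y)) (w (Function.update (s.piecewise 0 y) i 0))
      simp only [Pi.zero_apply]
      linarith
  have h := key Finset.univ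
  rw [Finset.piecewise_univ, Finset.card_univ, Fintype.card_fin] at h
  exact h.trans (le_of_eq (by ring))

end BoundedHarmonic

end Gradient

/-! ### Power-law barriers -/

section Barrier

variable {d : ℕ}

/-- The squared Euclidean norm on `ℤ^d`. -/
def nsq (x : Lat d) : ℝ := ∑ i, (x i : ℝ) ^ 2

theorem nsq_nonneg (x : Lat d) : 0 ≤ nsq x := Finset.sum_nonneg fun _ _ => sq_nonneg _

theorem sq_le_nsq (x : Lat d) (i : Fin d) : (x i : ℝ) ^ 2 ≤ nsq x :=
  Finset.single_le_sum (f := fun i => (x i : ℝ) ^ 2) (fun _ _ => sq_nonneg _) (Finset.mem_univ i)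

theorem nsq_le_of_mem_cube {x : Lat d} {L : ℕ} (hx : x ∈ cube d L) :
    nsq x ≤ d * (L : ℝ) ^ 2 := by
  have h (i : Fin d) : (x i : ℝ) ^ 2 ≤ (L : ℝ) ^ 2 :=
    sq_le_sq.2 (by rw [Nat.abs_cast]; exact_mod_cast hx i)
  simpa [nsq] using Finset.sum_le_card_nsmul Finset.univ _ _ fun i _ => h i

theorem nsq_add_single (x : Lat d) (i : Fin d) (t : ℤ) :
    nsq (x + Pi.single i t) = nsq x + t ^ 2 + 2 * t * x i := by
  unfold nsq
  rw [add_assoc, ← sub_eq_iff_eq_add', ← Finset.sum_sub_distrib, Finset.sum_eq_single i]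
  · simp only [Pi.add_apply, Pi.single_eq_same, Int.cast_add]
    ring
  · intro j _ hj
    simp [hj]
  · simp

theorem nsq_add_single_one (x : Lat d) (i : Fin d) :
    nsq (x + Pi.single i 1) = nsq x + (1 + 2 * x i) := by
  rw [nsq_add_single]
  push_cast
  ring

theorem nsq_sub_single_one (x : Lat d) (i : Fin d) :
    nsq (x - Pi.single i 1) = nsq x + (1 - 2 * x i) := by
  rw [sub_eq_add_neg, ← Pi.single_neg, nsq_add_single]
  push_cast
  ring

section InversePower

theorem one_add_sq_div_two_le_cosh (y : ℝ) : 1 + y ^ 2 / 2 ≤ Real.cosh y := by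
  have cosh_eq : Real.cosh y = 1 + 2 * Real.sinh (|y| / 2) ^ 2 := by
    rw [← Real.cosh_abs, ← mul_div_cancel₀ |y| (two_ne_zero (α := ℝ)), Real.cosh_two_mul,
      Real.cosh_sq, mul_div_cancel_left₀ _ (two_ne_zero (α := ℝ))]
    ring
  have sq_le : (|y| / 2) ^ 2 ≤ Real.sinh (|y| / 2) ^ 2 := by
    gcongr
    exact Real.self_le_sinh_iff.2 (by positivity)
  rw [div_pow, sq_abs] at sq_le
  linarith

theorem inv_pow_mul_exp_le {s a : ℝ} (n : ℕ) (hs : 0 < s) (ha : 0 < s + a) :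
    (s ^ n)⁻¹ * Real.exp (-(n * (a / s))) ≤ ((s + a) ^ n)⁻¹ := by
  rw [Real.exp_neg, ← mul_inv]
  refine inv_anti₀ (by positivity) ?_
  calc (s + a) ^ n = s ^ n * (a / s + 1) ^ n := by rw [← mul_pow]; field_simp; ring_nf
    _ ≤ s ^ n * Real.exp (n * (a / s)) := by
      have : 0 ≤ a / s + 1 := by
        rw [div_add_one hs.ne', add_comm]
        positivity
      rw [Real.exp_nat_mul]
      gcongr
      exact Real.add_one_le_exp _

theorem le_exp_neg_add_exp_neg {u : ℝ} (hu : u ≤ 1) (v : ℝ) :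
    2 * (1 - u) * (1 + v ^ 2 / 2) ≤ Real.exp (-(u + v)) + Real.exp (-(u - v)) := by
  calc 2 * (1 - u) * (1 + v ^ 2 / 2) ≤ 2 * Real.exp (-u) * Real.cosh v := by
        have : 0 ≤ 1 - u := sub_nonneg.2 hu
        gcongr
        · exact Real.one_sub_le_exp_neg u
        · exact one_add_sq_div_two_le_cosh v
    _ = Real.exp (-(u + v)) + Real.exp (-(u - v)) := by
        rw [Real.cosh_eq, neg_add, neg_sub, sub_eq_neg_add, Real.exp_add, Real.exp_add]
        ring

theorem le_inv_pow_nsq_add_inv_pow_nsq {x : Lat d} (hd : 2 ≤ d) (hx : 2 * d ≤ nsq x) (i : Fin d) :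
    (nsq x ^ d)⁻¹ * (2 * (1 - d / nsq x) * (1 + (2 * d * x i / nsq x) ^ 2 / 2)) ≤
      (nsq (x + Pi.single i 1) ^ d)⁻¹ + (nsq (x - Pi.single i 1) ^ d)⁻¹ := by
  have hd' : (2 : ℝ) ≤ d := by exact_mod_cast hd
  have hxi := sq_le_nsq x i
  rw [nsq_add_single_one, nsq_sub_single_one]
  generalize nsq x = s at *
  have hs : 0 < s := by linarith
  obtain ⟨hlower, hupper⟩ := abs_lt.1 <| abs_lt_of_sq_lt_sq
    (show (2 * (x i : ℝ)) ^ 2 < (s + 1) ^ 2 by nlinarith) (by linarith)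
  calc (s ^ d)⁻¹ * (2 * (1 - d / s) * (1 + (2 * d * x i / s) ^ 2 / 2))
      ≤ (s ^ d)⁻¹ * (Real.exp (-(d / s + 2 * d * x i / s)) +
          Real.exp (-(d / s - 2 * d * x i / s))) := by
        gcongr
        exact le_exp_neg_add_exp_neg (by rw [div_le_one hs]; linarith) _
    _ = (s ^ d)⁻¹ * Real.exp (-(d * ((1 + 2 * x i) / s))) +
          (s ^ d)⁻¹ * Real.exp (-(d * ((1 - 2 * x i) / s))) := by ring_nf
    _ ≤ ((s + (1 + 2 * x i)) ^ d)⁻¹ + ((s + (1 - 2 * x i)) ^ d)⁻¹ :=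
        add_le_add (inv_pow_mul_exp_le d hs (by linarith)) (inv_pow_mul_exp_le d hs (by linarith))

/-- `|x|^{-2d}` decays faster than the Green function, hence is subharmonic. -/
theorem le_avg_inv_pow_nsq (hd : 2 ≤ d) {x : Lat d} (hx : 2 * d ≤ nsq x) :
    (nsq x ^ d)⁻¹ ≤ avg (fun y => (nsq y ^ d)⁻¹) x := by
  have hd' : (2 : ℝ) ≤ d := by exact_mod_cast hd
  have hs : 0 < nsq x := by linarith
  unfold avg
  rw [le_div_iff₀ (by positivity)]
  refine le_trans ?_ (Finset.sum_le_sum fun i _ => le_inv_pow_nsq_add_inv_pow_nsq hd hx i)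
  have sum_sq : ∑ i, (1 + (2 * d * x i / nsq x) ^ 2 / 2) = d + 2 * d ^ 2 / nsq x := by
    have (i : Fin d) : 1 + (2 * d * x i / nsq x) ^ 2 / 2 =
        1 + 2 * d ^ 2 / nsq x ^ 2 * (x i : ℝ) ^ 2 := by ring
    simp only [this, Finset.sum_add_distrib, ← Finset.mul_sum, ← nsq.eq_def, Finset.sum_const,
      Finset.card_univ, Fintype.card_fin, nsmul_eq_mul]
    field_simp
  rw [← Finset.mul_sum, ← Finset.mul_sum, sum_sq]
  refine mul_le_mul_of_nonneg_left ?_ (by positivity)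
  have excess : 2 * (1 - d / nsq x) * (d + 2 * d ^ 2 / nsq x) =
      2 * d + 2 * d ^ 2 * (nsq x - 2 * d) / nsq x ^ 2 := by
    field_simp
    ring
  have : 0 ≤ 2 * (d : ℝ) ^ 2 * (nsq x - 2 * d) / nsq x ^ 2 :=
    div_nonneg (mul_nonneg (by positivity) (by linarith)) (by positivity)
  linarith

end InversePower

section Decay

theorem one_add_rpow_neg_quarter_le {t : ℝ} (ht : |t| ≤ 1 / 40) :
    (1 + t) ^ (-(1 / 4) : ℝ) ≤ 1 - t / 4 + 11 / 64 * t ^ 2 := by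
  obtain ⟨hlower, hupper⟩ := abs_le.1 ht
  have hpos : 0 < 1 + t := by linarith
  have sqrt_bound : 1 ≤ (1 - t / 2 + 2 / 5 * t ^ 2) ^ 2 * (1 + t) := by
    have : 0 ≤ t ^ 2 * (1 / 20 + 13 / 20 * t - 6 / 25 * t ^ 2 + 4 / 25 * t ^ 3) := by
      refine mul_nonneg (sq_nonneg t) ?_
      nlinarith [sq_nonneg t]
    linarith
  have fourth_root_bound : 1 - t / 2 + 2 / 5 * t ^ 2 ≤ (1 - t / 4 + 11 / 64 * t ^ 2) ^ 2 := by
    have : 0 ≤ t ^ 2 * (1 / 160 - 11 / 128 * t + 121 / 4096 * t ^ 2) :=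
      mul_nonneg (sq_nonneg t) (by nlinarith [sq_nonneg t])
    linarith
  rw [Real.rpow_neg hpos.le, inv_le_iff_one_le_mul₀ (by positivity)]
  refine (one_le_pow_iff_of_nonneg (by nlinarith [Real.rpow_nonneg hpos.le (1 / 4)])
    (by norm_num : 4 ≠ 0)).1 ?_
  have hroot : ((1 + t) ^ (1 / 4 : ℝ)) ^ 4 = 1 + t := by
    rw [← Real.rpow_natCast, ← Real.rpow_mul hpos.le]
    norm_num
  calc 1 ≤ (1 - t / 2 + 2 / 5 * t ^ 2) ^ 2 * (1 + t) := sqrt_bound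
    _ ≤ ((1 - t / 4 + 11 / 64 * t ^ 2) ^ 2) ^ 2 * (1 + t) := by
        gcongr
        nlinarith
    _ = ((1 - t / 4 + 11 / 64 * t ^ 2) * (1 + t) ^ (1 / 4 : ℝ)) ^ 4 := by
        rw [mul_pow, hroot]
        ring

theorem add_rpow_neg_quarter_le {s a : ℝ} (hs : 0 < s) (ha : |a| ≤ s / 40) :
    (s + a) ^ (-(1 / 4) : ℝ) ≤
      s ^ (-(1 / 4) : ℝ) * (1 - a / s / 4 + 11 / 64 * (a / s) ^ 2) := by
  have hratio : |a / s| ≤ 1 / 40 := by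
    rw [abs_div, abs_of_pos hs, div_le_iff₀ hs]
    linarith
  have hsplit : s + a = s * (1 + a / s) := by field_simp
  rw [hsplit, Real.mul_rpow hs.le (by linarith [(abs_le.1 hratio).1])]
  gcongr
  exact one_add_rpow_neg_quarter_le hratio

/-- The function `(|x|² + 2000)^{-1/4}`, a superharmonic function vanishing at infinity. The shift
by `2000` makes it superharmonic on all of `ℤ^d`, including near the origin. -/
def decay (x : Lat d) : ℝ := (nsq x + 2000) ^ (-(1 / 4) : ℝ)

theorem decay_pos (x : Lat d) : 0 < decay x :=
  Real.rpow_pos_of_pos (by linarith [nsq_nonneg x]) _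

theorem decay_add_decay_le (x : Lat d) (i : Fin d) :
    decay (x + Pi.single i 1) + decay (x - Pi.single i 1) ≤ decay x *
      (2 - 1 / (2 * (nsq x + 2000)) + 11 / 32 * (1 + 4 * (x i : ℝ) ^ 2) / (nsq x + 2000) ^ 2) := by
  have hx := nsq_nonneg x
  have hxi := sq_le_nsq x i
  have hstep : |2 * (x i : ℝ)| ≤ (nsq x + 2000) / 40 - 1 := by
    refine abs_le_of_sq_le_sq ?_ (by linarith)
    nlinarith [sq_nonneg (nsq x - 1000)]
  obtain ⟨hlower, hupper⟩ := abs_le.1 hstep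
  unfold decay
  rw [nsq_add_single_one, nsq_sub_single_one, add_right_comm _ _ 2000, add_right_comm _ _ 2000]
  generalize nsq x + 2000 = s at *
  have hs : 0 < s := by linarith
  refine (add_le_add
    (add_rpow_neg_quarter_le (a := 1 + 2 * x i) hs (abs_le.2 ⟨by linarith, by linarith⟩))
    (add_rpow_neg_quarter_le (a := 1 - 2 * x i) hs (abs_le.2 ⟨by linarith, by linarith⟩))).trans
    (le_of_eq ?_)
  rw [← mul_add]
  congr 1
  field_simp
  ring

theorem avg_decay_le (hd : 3 ≤ d) (x : Lat d) : avg decay x ≤ decay x := by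
  have hd' : (3 : ℝ) ≤ d := by exact_mod_cast hd
  have hx := nsq_nonneg x
  unfold avg
  rw [div_le_iff₀ (by positivity)]
  refine (Finset.sum_le_sum fun i _ => decay_add_decay_le x i).trans ?_
  rw [← Finset.mul_sum, Finset.sum_add_distrib, ← Finset.sum_div, ← Finset.mul_sum,
    Finset.sum_add_distrib, ← Finset.mul_sum, ← nsq.eq_def]
  refine mul_le_mul_of_nonneg_left ?_ (decay_pos x).le
  simp only [Finset.sum_const, Finset.card_univ, Fintype.card_fin, nsmul_eq_mul, mul_one]
  have deficit : d * (2 - 1 / (2 * (nsq x + 2000))) +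
      11 / 32 * (d + 4 * nsq x) / (nsq x + 2000) ^ 2 =
      2 * d - (d * (nsq x + 2000) / 2 - 11 / 32 * (d + 4 * nsq x)) / (nsq x + 2000) ^ 2 := by
    field_simp
    ring
  have : 0 ≤ (d * (nsq x + 2000) / 2 - 11 / 32 * (d + 4 * nsq x)) / (nsq x + 2000) ^ 2 :=
    div_nonneg (by nlinarith) (by positivity)
  linarith

end Decay

end Barrier

/-! ### The Harnack inequality -/

section Harnack

variable {d : ℕ}

theorem mem_cube_iff_norm_le {x : Lat d} {L : ℕ} : x ∈ cube d L ↔ ‖x‖ ≤ L := by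
  rw [pi_norm_le_iff_of_nonneg (Nat.cast_nonneg L)]
  refine forall_congr' fun i => ?_
  rw [Int.norm_eq_abs]
  exact_mod_cast Iff.rfl

theorem mem_cube_iff_norm_lt {x : Lat d} {L : ℕ} : x ∈ cube d L ↔ ‖x‖ < L + 1 := by
  rw [pi_norm_lt_iff (by positivity)]
  refine forall_congr' fun i => ?_
  rw [Int.norm_eq_abs, ← Int.lt_add_one_iff]
  exact_mod_cast Iff.rfl

section NearOrigin

theorem exists_adj_sum_natAbs_lt {y : Lat d} (hy : y ≠ 0) :
    ∃ z, adj y z ∧ ∑ i, (z i).natAbs < ∑ i, (y i).natAbs := by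
  obtain ⟨i, hi⟩ := Function.ne_iff.1 hy
  have lt_of_decrease {z : Lat d} (hz : (z i).natAbs < (y i).natAbs) (hne : ∀ j ≠ i, z j = y j) :
      ∑ j, (z j).natAbs < ∑ j, (y j).natAbs := by
    refine Finset.sum_lt_sum (fun j _ => ?_) ⟨i, Finset.mem_univ i, hz⟩
    obtain rfl | hj := eq_or_ne j i
    · exact hz.le
    · rw [hne j hj]
  rcases lt_or_gt_of_ne hi with hneg | hpos
  · refine ⟨_, adj_add_single y i, lt_of_decrease ?_ fun j hj => by simp [hj]⟩
    simp only [Pi.add_apply, Pi.single_eq_same, Pi.zero_apply] at hneg ⊢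
    omega
  · refine ⟨_, adj_sub_single y i, lt_of_decrease ?_ fun j hj => by simp [hj]⟩
    simp only [Pi.sub_apply, Pi.single_eq_same, Pi.zero_apply] at hpos ⊢
    omega

theorem mem_cube_of_sum_natAbs_le {y : Lat d} {n : ℕ} (h : ∑ i, (y i).natAbs ≤ n) :
    y ∈ cube d n := fun i => by
  have := (Finset.single_le_sum (f := fun i => (y i).natAbs) (fun _ _ => Nat.zero_le _)
    (Finset.mem_univ i)).trans h
  rw [Int.abs_eq_natAbs]
  exact_mod_cast this

theorem le_pow_mul_of_sum_natAbs_le {w : Lat d → ℝ} (hw : ∀ x, 0 ≤ w x) {n : ℕ}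
    (hsup : ∀ z ∈ cube d n, avg w z ≤ w z) {y : Lat d} (hy : ∑ i, (y i).natAbs ≤ n) :
    w 0 ≤ (2 * d) ^ (∑ i, (y i).natAbs) * w y := by
  induction hk : ∑ i, (y i).natAbs using Nat.strong_induction_on generalizing y with
  | _ k ih =>
    subst hk
    obtain rfl | hy0 := eq_or_ne y 0
    · simp
    obtain ⟨z, hyz, hlt⟩ := exists_adj_sum_natAbs_lt hy0
    have hd : (1 : ℝ) ≤ 2 * d := by
      obtain ⟨i, -⟩ := Function.ne_iff.1 hy0
      exact_mod_cast (by have := i.pos; omega : 1 ≤ 2 * d)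
    have hstep : w z ≤ 2 * d * w y := by
      rw [← div_le_iff₀' (by linarith)]
      exact (div_le_avg_of_adj hw hyz).trans (hsup y (mem_cube_of_sum_natAbs_le hy))
    calc w 0 ≤ (2 * d) ^ (∑ i, (z i).natAbs) * w z := ih _ hlt (hlt.le.trans hy) rfl
      _ ≤ (2 * d) ^ (∑ i, (z i).natAbs) * (2 * d * w y) := by gcongr
      _ = (2 * d) ^ (∑ i, (z i).natAbs + 1) * w y := by ring
      _ ≤ (2 * d) ^ (∑ i, (y i).natAbs) * w y :=
        mul_le_mul_of_nonneg_right (pow_le_pow_right₀ hd hlt) (hw y)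

theorem sum_natAbs_le_nsq (y : Lat d) : ((∑ i, (y i).natAbs : ℕ) : ℝ) ≤ nsq y := by
  push_cast
  refine Finset.sum_le_sum fun i _ => ?_
  calc ((y i).natAbs : ℝ) ≤ ((y i).natAbs : ℝ) ^ 2 := by
        exact_mod_cast Nat.le_self_pow two_ne_zero _
    _ = (y i : ℝ) ^ 2 := by rw [Nat.cast_natAbs, Int.cast_abs, sq_abs]

end NearOrigin

section FarFromOrigin

theorem mem_cube_of_nsq_le {y : Lat d} {n : ℕ} (h : nsq y ≤ (n : ℝ) ^ 2) :
    y ∈ cube d n := fun i => by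
  have := abs_le_of_sq_le_sq ((sq_le_nsq y i).trans h) (Nat.cast_nonneg n)
  exact_mod_cast this

theorem finite_setOf_nsq_le (Q : ℝ) : {y : Lat d | nsq y ≤ Q}.Finite := by
  refine (finite_cube ⌈Real.sqrt Q⌉₊).subset fun y hy => mem_cube_of_nsq_le (le_trans hy ?_)
  exact (Real.sqrt_le_left (by positivity)).1 (Nat.le_ceil _)

theorem nsq_div_four_le_of_adj {x y : Lat d} (hxy : adj x y) (hx : 4 ≤ nsq x) :
    nsq x / 4 ≤ nsq y := by
  obtain ⟨i, hi⟩ := adj_iff_exists_single.1 hxy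
  have hxi := sq_le_nsq x i
  have habs := abs_le.1 <| abs_le_of_sq_le_sq
    (show (2 * (x i : ℝ)) ^ 2 ≤ (3 * nsq x / 4 + 1) ^ 2 by nlinarith) (by linarith)
  rcases hi with rfl | rfl
  · rw [nsq_add_single_one]
    linarith
  · rw [nsq_sub_single_one]
    linarith

theorem inv_two_mul_pow_le {s P : ℝ} {n : ℕ} (hn : n ≠ 0) (hs : 0 < s) (hsP : s ≤ P) :
    ((2 * P) ^ n)⁻¹ ≤ (s ^ n)⁻¹ / 2 := by
  have : 2 * s ^ n ≤ (2 * P) ^ n := by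
    rw [mul_pow]
    gcongr
    exact le_self_pow₀ one_le_two hn
  calc ((2 * P) ^ n)⁻¹ ≤ (2 * s ^ n)⁻¹ := inv_anti₀ (by positivity) this
    _ = (s ^ n)⁻¹ / 2 := by rw [mul_inv]; ring

/-- Comparison with the subharmonic function `|y|^{-2d}`, shifted so as to vanish at the outer
boundary. -/
theorem mul_inv_pow_sub_le_of_ball_lower_bound (hd : 2 ≤ d) {w : Lat d → ℝ} (hw : ∀ x, 0 ≤ w x)
    {S Q m : ℝ} (hm : 0 ≤ m) (hS : 2 * d ≤ S) (hsup : ∀ y, nsq y ≤ Q → avg w y ≤ w y)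
    (hball : ∀ y, nsq y ≤ S → m ≤ w y) {x : Lat d} (hSx : S < nsq x) (hxQ : nsq x ≤ Q) :
    m * (S / 4) ^ d * ((nsq x ^ d)⁻¹ - (Q ^ d)⁻¹) ≤ w x := by
  have hd' : (2 : ℝ) ≤ d := by exact_mod_cast hd
  have hS0 : 0 < S := by linarith
  have hQ0 : 0 < Q := by linarith
  set D : Set (Lat d) := {y | S < nsq y ∧ nsq y ≤ Q}
  refine le_of_le_avg_of_avg_le (D := D)
    (v := fun y => m * (S / 4) ^ d * ((nsq y ^ d)⁻¹ - (Q ^ d)⁻¹))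
    ((finite_setOf_nsq_le Q).subset fun y hy => hy.2) (fun y hy => ?_) (fun y hy => hsup y hy.2)
    (fun y hy z hyz hz => ?_) x ⟨hSx, hxQ⟩
  · rw [avg_const_mul, avg_sub, avg_const (by omega)]
    gcongr
    exact le_avg_inv_pow_nsq hd (by linarith [hy.1])
  · have hSz : S / 4 ≤ nsq z := by linarith [hy.1, nsq_div_four_le_of_adj hyz (by linarith [hy.1])]
    by_cases hzS : nsq z ≤ S
    · have : (nsq z ^ d)⁻¹ - (Q ^ d)⁻¹ ≤ ((S / 4) ^ d)⁻¹ :=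
        (sub_le_self _ (by positivity)).trans (inv_anti₀ (by positivity) (by gcongr))
      calc m * (S / 4) ^ d * ((nsq z ^ d)⁻¹ - (Q ^ d)⁻¹)
          ≤ m * (S / 4) ^ d * ((S / 4) ^ d)⁻¹ := by gcongr
        _ = m := by field_simp
        _ ≤ w z := hball z hzS
    · have hzQ : Q < nsq z := not_le.1 fun h => hz ⟨not_le.1 hzS, h⟩
      refine le_trans (mul_nonpos_of_nonneg_of_nonpos (by positivity) (sub_nonpos.2 ?_)) (hw z)
      gcongr

theorem le_of_ball_lower_bound (hd : 2 ≤ d) {w : Lat d → ℝ} (hw : ∀ x, 0 ≤ w x) {S P m : ℝ}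
    (hm : 0 ≤ m) (hS : 2 * d ≤ S) (hSP : S ≤ P) (hsup : ∀ y, nsq y ≤ 2 * P → avg w y ≤ w y)
    (hball : ∀ y, nsq y ≤ S → m ≤ w y) {x : Lat d} (hx : nsq x ≤ P) :
    m * (S / (4 * P)) ^ d / 2 ≤ w x := by
  have hd' : (2 : ℝ) ≤ d := by exact_mod_cast hd
  have hS0 : 0 < S := by linarith
  have hP0 : 0 < P := by linarith
  obtain hxS | hxS := le_or_gt (nsq x) S
  · have : (S / (4 * P)) ^ d ≤ 1 :=
      pow_le_one₀ (by positivity) ((div_le_one (by positivity)).2 (by linarith))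
    nlinarith [hball x hxS]
  have hx0 : 0 < nsq x := hS0.trans hxS
  have hinv := inv_two_mul_pow_le (by omega : d ≠ 0) hx0 hx
  calc m * (S / (4 * P)) ^ d / 2 = m * (S / 4) ^ d * ((P ^ d)⁻¹ / 2) := by
        rw [← div_div, div_pow _ P]
        ring
    _ ≤ m * (S / 4) ^ d * ((nsq x ^ d)⁻¹ / 2) := by gcongr
    _ ≤ m * (S / 4) ^ d * ((nsq x ^ d)⁻¹ - ((2 * P) ^ d)⁻¹) := by
        gcongr
        linarith
    _ ≤ w x := mul_inv_pow_sub_le_of_ball_lower_bound hd hw hm hS hsup hball hxS (by linarith)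

end FarFromOrigin

theorem half_apply_zero_le_of_le_mul {w : Lat d → ℝ} {L ρ : ℕ} {A : ℝ}
    (hw : IsHarmonicOn w (cube d (2 * L)))
    (hA : ∀ x ∈ cube d (2 * L + 1), w x ∈ Set.Icc 0 (A * w 0)) (hρ : ρ ≤ L)
    (hLA : 8 * d ^ 2 * A * ρ ≤ L + 1) {y : Lat d} (hy : y ∈ cube d ρ) : w 0 / 2 ≤ w y := by
  have hw0 := (hA 0 (zero_mem_cube _)).1
  have hgrad : 4 * (d : ℝ) ^ 2 * (A * w 0) * ρ / (L + 1) ≤ w 0 / 2 := by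
    rw [div_le_iff₀ (by positivity)]
    nlinarith [mul_le_mul_of_nonneg_right hLA hw0]
  linarith [(abs_le.1 ((abs_sub_apply_zero_le hw hA hρ hy).trans hgrad)).1]

/-- The ratio between the distance to the boundary and the radius of the ball on which the gradient
estimate keeps a harmonic function comparable to its value at the centre. -/
def harnackScale (d : ℕ) : ℕ := 4 * (8 * d ^ 2 * 4 ^ d) + 2

theorem three_le_harnackScale (hd : 0 < d) : 3 ≤ harnackScale d := by
  have : 0 < 8 * d ^ 2 * 4 ^ d := by positivity
  rw [harnackScale]
  omega

/-- The squared radius of the Euclidean ball on which a function harmonic up to distance of order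
`s` is bounded below by a multiple of its value at the centre; it is kept above `2 * d` so that the
ball contains the neighbours of its centre and theirs. -/
def harnackRadiusSq (d : ℕ) (s : ℝ) : ℝ :=
  max (2 * (d : ℝ)) ((⌊s / harnackScale d⌋₊ : ℝ) ^ 2)

theorem harnackRadiusSq_le (hd : 0 < d) {s R : ℝ} (hs : 0 ≤ s) (hR : 1 ≤ R) (hsR : s ≤ 3 * R) :
    harnackRadiusSq d s ≤ 4 * d * R ^ 2 := by
  have hd1 : (1 : ℝ) ≤ d := by exact_mod_cast hd
  have hK : (3 : ℝ) ≤ harnackScale d := by exact_mod_cast three_le_harnackScale hd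
  have hfloor : (⌊s / harnackScale d⌋₊ : ℝ) ≤ R :=
    (Nat.floor_le (by positivity)).trans ((div_le_iff₀ (by positivity)).2 (by nlinarith))
  refine max_le (by nlinarith [one_le_pow₀ (n := 2) hR]) ?_
  calc (⌊s / harnackScale d⌋₊ : ℝ) ^ 2 ≤ R ^ 2 := by gcongr
    _ ≤ 4 * d * R ^ 2 := le_mul_of_one_le_left (by positivity) (by linarith)

theorem sq_le_four_mul_max_floor_sq {t a : ℝ} (ht : 0 ≤ t) (ha : 1 ≤ a) :
    t ^ 2 ≤ 4 * max a ((⌊t⌋₊ : ℝ) ^ 2) := by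
  have hlt := (Nat.lt_floor_add_one t).le
  calc t ^ 2 ≤ ((⌊t⌋₊ : ℝ) + 1) ^ 2 := by gcongr
    _ ≤ 4 * max a ((⌊t⌋₊ : ℝ) ^ 2) := by
      nlinarith [le_max_left a ((⌊t⌋₊ : ℝ) ^ 2), le_max_right a ((⌊t⌋₊ : ℝ) ^ 2),
        sq_nonneg ((⌊t⌋₊ : ℝ) - 1)]

theorem sq_div_le_harnackRadiusSq (hd : 0 < d) {s : ℝ} (hs : 0 ≤ s) :
    (s / harnackScale d) ^ 2 / 4 ≤ harnackRadiusSq d s := by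
  have hd1 : (1 : ℝ) ≤ d := by exact_mod_cast hd
  rw [div_le_iff₀ four_pos, mul_comm]
  exact sq_le_four_mul_max_floor_sq (by positivity) (by linarith)

theorem inv_pow_mul_apply_zero_le_of_nsq_le {w : Lat d → ℝ} (hd : 0 < d) (hw : ∀ y, 0 ≤ w y)
    (hharm : ∀ y ∈ cube d (2 * d), avg w y ≤ w y) {y : Lat d} (hy : nsq y ≤ 2 * d) :
    ((2 * (d : ℝ)) ^ (2 * d))⁻¹ * w 0 ≤ w y := by
  have hd1 : (1 : ℝ) ≤ d := by exact_mod_cast hd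
  have hsum : ∑ i, (y i).natAbs ≤ 2 * d := by exact_mod_cast (sum_natAbs_le_nsq y).trans hy
  rw [inv_mul_le_iff₀ (by positivity)]
  refine (le_pow_mul_of_sum_natAbs_le hw hharm hsum).trans ?_
  gcongr
  · exact hw y
  · linarith

theorem half_apply_zero_le_of_mem_cube_floor (hd : 0 < d) {w : Lat d → ℝ}
    (hw : ∀ y, 0 ≤ w y) {s : ℝ} (hs : 0 ≤ s) (hharm : ∀ y, ‖y‖ ≤ s → avg w y = w y)
    (hle : ∀ y, ‖y‖ ≤ s / 2 → w y ≤ 4 ^ d * w 0) {y : Lat d}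
    (hy : y ∈ cube d ⌊s / harnackScale d⌋₊) : w 0 / 2 ≤ w y := by
  set ρ : ℕ := ⌊s / harnackScale d⌋₊
  set K : ℕ := 8 * d ^ 2 * 4 ^ d with hK
  have hρs : ρ * (4 * K + 2 : ℝ) ≤ s := by
    have : (harnackScale d : ℝ) = 4 * K + 2 := by rw [harnackScale, ← hK]; push_cast; ring
    rw [← le_div_iff₀ (by positivity), ← this]
    exact Nat.floor_le (by positivity)
  rcases Nat.eq_zero_or_pos ρ with hρ0 | hρ1
  · have hy0 : y = 0 := by
      ext i
      simpa [hρ0] using hy i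
    rw [hy0]
    exact half_le_self (hw 0)
  have hρ1' : (1 : ℝ) ≤ ρ := by exact_mod_cast hρ1
  refine half_apply_zero_le_of_le_mul (L := K * ρ) (A := 4 ^ d) (fun z hz => hharm z ?_)
    (fun z hz => ⟨hw z, hle z ?_⟩) (Nat.le_mul_of_pos_left _ (by positivity)) ?_ hy
  · have := mem_cube_iff_norm_le.1 hz
    push_cast at this
    linarith
  · have := mem_cube_iff_norm_le.1 hz
    push_cast at this
    linarith
  · rw [hK]
    push_cast
    linarith

theorem inv_pow_mul_apply_zero_le {w : Lat d → ℝ} (hd : 0 < d) (hw : ∀ y, 0 ≤ w y) {s : ℝ}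
    (hs : 0 ≤ s) (hharm : ∀ y, ‖y‖ ≤ s + 2 * d → avg w y = w y)
    (hle : ∀ y, ‖y‖ ≤ s / 2 → w y ≤ 4 ^ d * w 0) {y : Lat d} (hy : nsq y ≤ harnackRadiusSq d s) :
    ((2 * (d : ℝ)) ^ (2 * d))⁻¹ * w 0 ≤ w y := by
  have hd1 : (1 : ℝ) ≤ d := by exact_mod_cast hd
  obtain hy | hy := le_max_iff.1 hy
  · refine inv_pow_mul_apply_zero_le_of_nsq_le hd hw (fun z hz => (hharm z ?_).le) hy
    have := mem_cube_iff_norm_le.1 hz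
    push_cast at this
    linarith
  have hinv : ((2 * d : ℝ) ^ (2 * d))⁻¹ ≤ 1 / 2 := by
    rw [one_div]
    refine inv_anti₀ two_pos (le_trans (by linarith) (le_self_pow₀ ?_ (by omega : 2 * d ≠ 0)))
    linarith
  have hhalf := half_apply_zero_le_of_mem_cube_floor hd hw hs
    (fun z hz => hharm z (by linarith)) hle (mem_cube_of_nsq_le hy)
  linarith [mul_le_mul_of_nonneg_right hinv (hw 0)]

theorem le_two_pow_mul_of_weighted_le {U : Lat d → ℝ} {x z : Lat d} {T : ℝ} {n : ℕ}
    (hUz : 0 ≤ U z) (hmax : U z * (T - ‖z‖) ^ n ≤ U x * (T - ‖x‖) ^ n) (hx : ‖x‖ < T)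
    (hz : ‖z - x‖ ≤ (T - ‖x‖) / 2) : U z ≤ 2 ^ n * U x := by
  have hhalf : (T - ‖x‖) / 2 ≤ T - ‖z‖ := by linarith [norm_le_norm_sub_add z x]
  have hpos : 0 < T - ‖x‖ := sub_pos.2 hx
  refine le_of_mul_le_mul_right ?_ (by positivity : 0 < ((T - ‖x‖) / 2) ^ n)
  calc U z * ((T - ‖x‖) / 2) ^ n ≤ U z * (T - ‖z‖) ^ n := by gcongr
    _ ≤ U x * (T - ‖x‖) ^ n := hmax
    _ = 2 ^ n * U x * ((T - ‖x‖) / 2) ^ n := by rw [div_pow]; field_simp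

theorem inv_pow_mul_le_of_weighted_le {R : ℕ} (hd : 0 < d) {U : Lat d → ℝ} (hU0 : ∀ x, 0 ≤ U x)
    {x : Lat d} (hx : ‖x‖ ≤ 2 * R)
    (hmax : ∀ z ∈ cube d (2 * R),
      U z * (2 * R + 1 - ‖z‖) ^ (2 * d) ≤ U x * (2 * R + 1 - ‖x‖) ^ (2 * d))
    (hharm : ∀ y, ‖y‖ ≤ 2 * R + 1 - ‖x‖ + 2 * d →
      avg (fun z => U (z + x)) y = U (y + x))
    {y : Lat d} (hy : nsq y ≤ harnackRadiusSq d (2 * R + 1 - ‖x‖)) :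
    ((2 * (d : ℝ)) ^ (2 * d))⁻¹ * U x ≤ U (y + x) := by
  have hs : 0 < 2 * R + 1 - ‖x‖ := by linarith
  have hdouble (z : Lat d) (hz : ‖z‖ ≤ (2 * R + 1 - ‖x‖) / 2) : U (z + x) ≤ 4 ^ d * U x := by
    rw [show (4 : ℝ) = 2 ^ 2 by norm_num, ← pow_mul]
    refine le_two_pow_mul_of_weighted_le (hU0 _) (hmax _ (mem_cube_iff_norm_lt.2 ?_))
      (sub_pos.1 hs) (by rwa [add_sub_cancel_right])
    push_cast
    linarith [norm_add_le z x]
  simpa only [zero_add] using inv_pow_mul_apply_zero_le (w := fun y => U (y + x)) hd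
    (fun y => hU0 _) hs.le hharm (by simpa only [zero_add] using hdouble) hy

theorem weighted_le_mul_apply_zero (hd : 2 ≤ d) {R : ℕ} (hR : 1 ≤ R) {U : Lat d → ℝ}
    (hU0 : ∀ x, 0 ≤ U x) (hU : IsHarmonicOn U (cube d (5 * d * R))) {x : Lat d}
    (hx : x ∈ cube d (2 * R))
    (hmax : ∀ z ∈ cube d (2 * R),
      U z * (2 * R + 1 - ‖z‖) ^ (2 * d) ≤ U x * (2 * R + 1 - ‖x‖) ^ (2 * d)) :
    ((2 * (d : ℝ)) ^ (2 * d))⁻¹ * U x *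
      ((2 * R + 1 - ‖x‖) ^ 2 / (64 * d * harnackScale d ^ 2 * R ^ 2)) ^ d / 2 ≤ U 0 := by
  have hd0 : 0 < d := by omega
  have hd' : (2 : ℝ) ≤ d := by exact_mod_cast hd
  have hR' : (1 : ℝ) ≤ R := by exact_mod_cast hR
  have hxn : ‖x‖ ≤ 2 * R := by exact_mod_cast mem_cube_iff_norm_le.1 hx
  set s : ℝ := 2 * R + 1 - ‖x‖
  have hs0 : 0 ≤ s := by linarith
  have hsR : s ≤ 3 * R := by linarith [norm_nonneg x]
  set S : ℝ := harnackRadiusSq d s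
  have hSR : S ≤ 4 * d * R ^ 2 := harnackRadiusSq_le hd0 hs0 hR' hsR
  have hharm (y : Lat d) (hy : ‖y + x‖ ≤ 5 * d * R) : avg (fun z => U (z + x)) y = U (y + x) := by
    rw [avg_comp_add_right]
    exact hU _ (mem_cube_iff_norm_le.2 (by exact_mod_cast hy))
  have hball (y : Lat d) (hy : nsq y ≤ S) : ((2 * (d : ℝ)) ^ (2 * d))⁻¹ * U x ≤ U (y + x) :=
    inv_pow_mul_le_of_weighted_le hd0 hU0 hxn hmax
      (fun z hz => hharm z (by nlinarith [norm_add_le z x])) hy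
  have hharmS (y : Lat d) (hy : nsq y ≤ 2 * (4 * d * R ^ 2)) :
      avg (fun z => U (z + x)) y ≤ U (y + x) := by
    have hy3 : ‖y‖ ≤ (3 * d * R : ℕ) := mem_cube_iff_norm_le.1 <| mem_cube_of_nsq_le <|
      hy.trans (by push_cast; nlinarith [sq_nonneg (R : ℝ)])
    push_cast at hy3
    exact (hharm y (by nlinarith [norm_add_le y x])).le
  have hnx : nsq (-x) ≤ 4 * d * R ^ 2 := by
    refine (nsq_le_of_mem_cube (L := 2 * R) fun i => ?_).trans_eq (by push_cast; ring)
    simpa using hx i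
  have hratio : s ^ 2 / (64 * d * harnackScale d ^ 2 * R ^ 2) ≤ S / (4 * (4 * d * R ^ 2)) := by
    refine le_of_eq_of_le ?_
      (div_le_div_of_nonneg_right (sq_div_le_harnackRadiusSq hd0 hs0) (by positivity))
    field_simp
    norm_num
  have hUx := hU0 x
  calc _ ≤ ((2 * (d : ℝ)) ^ (2 * d))⁻¹ * U x * (S / (4 * (4 * d * R ^ 2))) ^ d / 2 := by gcongr
    _ ≤ U (-x + x) := le_of_ball_lower_bound (w := fun y => U (y + x)) hd (fun y => hU0 _)
        (by positivity) (le_max_left _ _) hSR hharmS hball hnx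
    _ = U 0 := by rw [neg_add_cancel]

/-- The maximum over the cube of radius `2R` of `U` times a power of the distance to the boundary is
attained at a point around which `U` is bounded by a multiple of its value there. -/
theorem exists_harnack (hd : 2 ≤ d) : ∃ C : ℝ, 0 < C ∧ ∀ R : ℕ, 1 ≤ R → ∀ U : Lat d → ℝ,
    (∀ x, 0 ≤ U x) → IsHarmonicOn U (cube d (5 * d * R)) → ∀ y ∈ cube d R, U y ≤ C * U 0 := by
  have hd' : 0 < d := by omega
  have hK := three_le_harnackScale hd'
  set c : ℝ := ((2 * (d : ℝ)) ^ (2 * d))⁻¹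
  set P : ℝ := 64 * d * harnackScale d ^ 2
  have hc0 : 0 < c := by positivity
  have hP0 : 0 < P := by positivity
  refine ⟨2 / c * P ^ d, by positivity, fun R hR U hU0 hU y hy => ?_⟩
  obtain ⟨x, hx, hmax⟩ := Set.exists_max_image (cube d (2 * R))
    (fun x => U x * (2 * R + 1 - ‖x‖) ^ (2 * d)) (finite_cube _) ⟨0, zero_mem_cube _⟩
  set s : ℝ := 2 * R + 1 - ‖x‖
  have hweight : U y * R ^ (2 * d) ≤ U x * s ^ (2 * d) := by
    refine le_trans ?_ (hmax y (cube_mono (by omega) hy))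
    have := mem_cube_iff_norm_le.1 hy
    gcongr
    · exact hU0 y
    · linarith
  have hpow : (s ^ 2 / (P * R ^ 2)) ^ d = s ^ (2 * d) / (P ^ d * R ^ (2 * d)) := by
    rw [div_pow, mul_pow, ← pow_mul, ← pow_mul]
  calc U y = 2 / c * P ^ d * (c * (U y * R ^ (2 * d)) / (P ^ d * R ^ (2 * d)) / 2) := by field_simp
    _ ≤ 2 / c * P ^ d * (c * (U x * s ^ (2 * d)) / (P ^ d * R ^ (2 * d)) / 2) := by gcongr
    _ = 2 / c * P ^ d * (c * U x * (s ^ 2 / (P * R ^ 2)) ^ d / 2) := by rw [hpow]; ring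
    _ ≤ 2 / c * P ^ d * U 0 := by
      gcongr
      exact weighted_le_mul_apply_zero hd hR hU0 hU hx hmax

end Harnack

/-! ### Harmonic majorants and escape probabilities -/

section HarmonicMajorant

variable {d : ℕ} {R : Type*} [AddGroupWithOne R] {S : Set (Fin d → R)} {u w : (Fin d → R) → ℝ}
  {M : ℝ}

theorem tendsto_avg {ι : Type*} {l : Filter ι} {F : ι → (Fin d → R) → ℝ} {G : (Fin d → R) → ℝ}
    (h : ∀ x, Tendsto (fun n => F n x) l (nhds (G x))) (x : Fin d → R) :
    Tendsto (fun n => avg (F n) x) l (nhds (avg G x)) :=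
  (tendsto_finsetSum _ fun _ _ => (h _).add (h _)).div_const _

/-- Iterates of averaging on `S`, with the values of `u` frozen off `S`: the expectation of `u` at
the position at time `n` of the walk stopped on leaving `S`. -/
def avgIter (S : Set (Fin d → R)) (u : (Fin d → R) → ℝ) : ℕ → (Fin d → R) → ℝ
  | 0, x => u x
  | n + 1, x => if x ∈ S then avg (avgIter S u n) x else u x

theorem avgIter_of_notMem (n : ℕ) {x : Fin d → R} (hx : x ∉ S) : avgIter S u n x = u x := by
  cases n <;> simp [avgIter, hx]

theorem avgIter_le (huw : ∀ x, u x ≤ w x) (hw : ∀ x ∈ S, avg w x ≤ w x) (n : ℕ) (x : Fin d → R) :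
    avgIter S u n x ≤ w x := by
  induction n generalizing x with
  | zero => exact huw x
  | succ n ih =>
    rw [avgIter]
    split_ifs with hx
    · exact (avg_mono ih x).trans (hw x hx)
    · exact huw x

theorem avgIter_le_succ (hu : ∀ x ∈ S, u x ≤ avg u x) (n : ℕ) (x : Fin d → R) :
    avgIter S u n x ≤ avgIter S u (n + 1) x := by
  induction n generalizing x with
  | zero =>
    rw [avgIter, avgIter]
    split_ifs with hx
    · exact hu x hx
    · exact le_rfl
  | succ n ih =>
    rw [avgIter, avgIter]
    split_ifs with hx
    · exact avg_mono ih x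
    · exact le_rfl

/-- For `u` bounded and subharmonic on `S`, the least function that dominates `u`, is harmonic on
`S` and agrees with `u` off `S`. -/
def harmonicMajorant (S : Set (Fin d → R)) (u : (Fin d → R) → ℝ) (x : Fin d → R) : ℝ :=
  ⨆ n, avgIter S u n x

theorem bddAbove_range_avgIter (hd : 0 < d) (hM : ∀ x, u x ≤ M) (x : Fin d → R) :
    BddAbove (Set.range fun n => avgIter S u n x) :=
  ⟨M, Set.forall_mem_range.2 fun n =>
    avgIter_le (w := fun _ => M) hM (fun x _ => (avg_const hd M x).le) n x⟩

theorem tendsto_avgIter (hd : 0 < d) (hM : ∀ x, u x ≤ M) (hu : ∀ x ∈ S, u x ≤ avg u x)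
    (x : Fin d → R) :
    Tendsto (fun n => avgIter S u n x) atTop (nhds (harmonicMajorant S u x)) :=
  tendsto_atTop_ciSup (monotone_nat_of_le_succ fun n => avgIter_le_succ hu n x)
    (bddAbove_range_avgIter hd hM x)

theorem isHarmonicOn_harmonicMajorant (hd : 0 < d) (hM : ∀ x, u x ≤ M)
    (hu : ∀ x ∈ S, u x ≤ avg u x) : IsHarmonicOn (harmonicMajorant S u) S := fun x hx => by
  refine tendsto_nhds_unique (tendsto_avg (tendsto_avgIter hd hM hu) x) ?_
  refine ((tendsto_add_atTop_iff_nat 1).2 (tendsto_avgIter hd hM hu x)).congr fun n => ?_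
  rw [avgIter, if_pos hx]

theorem harmonicMajorant_of_notMem {x : Fin d → R} (hx : x ∉ S) : harmonicMajorant S u x = u x := by
  simp only [harmonicMajorant, avgIter_of_notMem _ hx, ciSup_const]

theorem le_harmonicMajorant (hd : 0 < d) (hM : ∀ x, u x ≤ M) (x : Fin d → R) :
    u x ≤ harmonicMajorant S u x :=
  le_ciSup (bddAbove_range_avgIter hd hM x) 0

theorem harmonicMajorant_le (huw : ∀ x, u x ≤ w x) (hw : ∀ x ∈ S, avg w x ≤ w x) (x : Fin d → R) :
    harmonicMajorant S u x ≤ w x :=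
  ciSup_le fun n => avgIter_le huw hw n x

end HarmonicMajorant

section EscapeProb

variable {d : ℕ} {R : Type*} [AddGroupWithOne R] {V : Set (Fin d → R)}

/-- The probability that the walk started at `x` avoids `V` up to time `m`. -/
def avoidProb (V : Set (Fin d → R)) : ℕ → (Fin d → R) → ℝ
  | 0, x => if x ∈ V then 0 else 1
  | m + 1, x => if x ∈ V then 0 else avg (avoidProb V m) x

/-- The probability that the walk started at `x` never visits `V`. -/
def escapeProb (V : Set (Fin d → R)) (x : Fin d → R) : ℝ :=
  1 - harmonicMajorant Vᶜ (V.indicator 1) x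

/-- The probability that the walk started at `x` does not visit `V` at positive times; on `V` this
is the equilibrium measure. -/
def noReturnProb (V : Set (Fin d → R)) (x : Fin d → R) : ℝ := avg (escapeProb V) x

theorem indicator_one_le_one {α : Type*} {V : Set α} (x : α) : V.indicator (1 : α → ℝ) x ≤ 1 :=
  Set.indicator_le_self' (fun _ _ => zero_le_one) x

theorem indicator_one_le_avg {x : Fin d → R} (hx : x ∈ Vᶜ) :
    V.indicator (1 : (Fin d → R) → ℝ) x ≤ avg (V.indicator 1) x := by
  rw [Set.indicator_of_notMem hx]
  exact avg_nonneg (Set.indicator_nonneg fun _ _ => zero_le_one) x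

theorem avoidProb_eq_one_sub (hd : 0 < d) (m : ℕ) :
    avoidProb V m = fun x => 1 - avgIter Vᶜ (V.indicator 1) m x := by
  induction m with
  | zero =>
    ext x
    rw [avoidProb, avgIter]
    by_cases hx : x ∈ V <;> simp [hx]
  | succ m ih =>
    ext x
    rw [avoidProb, ih]
    by_cases hx : x ∈ V
    · simp [hx, avgIter]
    · rw [if_neg hx, avgIter, if_pos (by exact hx), avg_sub, avg_const hd]

theorem tendsto_avoidProb (hd : 0 < d) (x : Fin d → R) :
    Tendsto (fun m => avoidProb V m x) atTop (nhds (escapeProb V x)) := by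
  simp only [avoidProb_eq_one_sub hd]
  exact (tendsto_avgIter hd indicator_one_le_one (fun _ => indicator_one_le_avg) x).const_sub 1

theorem isHarmonicOn_escapeProb (hd : 0 < d) : IsHarmonicOn (escapeProb V) Vᶜ := fun x hx => by
  unfold escapeProb
  rw [avg_sub, avg_const hd, isHarmonicOn_harmonicMajorant hd indicator_one_le_one
    (fun _ => indicator_one_le_avg) x hx]

theorem escapeProb_of_mem {x : Fin d → R} (hx : x ∈ V) : escapeProb V x = 0 := by
  rw [escapeProb, harmonicMajorant_of_notMem (Set.notMem_compl_iff.2 hx),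
    Set.indicator_of_mem hx, Pi.one_apply, sub_self]

theorem escapeProb_le_one (hd : 0 < d) (x : Fin d → R) : escapeProb V x ≤ 1 :=
  sub_le_self _ <| (Set.indicator_nonneg (fun _ _ => zero_le_one) x).trans
    (le_harmonicMajorant hd indicator_one_le_one x)

theorem one_sub_le_escapeProb {w : (Fin d → R) → ℝ} (hV : ∀ x, V.indicator 1 x ≤ w x)
    (hw : ∀ x ∈ Vᶜ, avg w x ≤ w x) (x : Fin d → R) : 1 - w x ≤ escapeProb V x :=
  sub_le_sub_left (harmonicMajorant_le hV hw x) 1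

theorem escapeProb_nonneg (hd : 0 < d) (x : Fin d → R) : 0 ≤ escapeProb V x := by
  simpa only [sub_self] using one_sub_le_escapeProb (V := V) (w := fun _ => 1)
    indicator_one_le_one (fun x _ => (avg_const hd 1 x).le) x

end EscapeProb

section Cube

variable {d r ρ : ℕ} {x : Lat d}

/-- A lower bound for `decay` on the cube of radius `r`. -/
def decayMin (d r : ℕ) : ℝ := (d * (r : ℝ) ^ 2 + 2000) ^ (-(1 / 4) : ℝ)

theorem decayMin_pos (d r : ℕ) : 0 < decayMin d r := Real.rpow_pos_of_pos (by positivity) _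

theorem decayMin_le_decay (hx : x ∈ cube d r) : decayMin d r ≤ decay x :=
  Real.rpow_le_rpow_of_nonpos (by linarith [nsq_nonneg x])
    (by linarith [nsq_le_of_mem_cube hx]) (by norm_num)

theorem add_one_sq_le_nsq_of_notMem_cube (hx : x ∉ cube d ρ) : ((ρ : ℝ) + 1) ^ 2 ≤ nsq x := by
  obtain ⟨i, hi⟩ : ∃ i, (ρ : ℤ) < |x i| := by
    by_contra! h
    exact hx h
  refine le_trans ?_ (sq_le_nsq x i)
  rw [← sq_abs (x i : ℝ)]
  gcongr
  exact_mod_cast hi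

/-- An upper bound for the probability of hitting the cube of radius `r` from outside the cube of
radius `ρ`. -/
def decayRatio (d r ρ : ℕ) : ℝ := (((ρ : ℝ) + 1) ^ 2) ^ (-(1 / 4) : ℝ) / decayMin d r

theorem decayRatio_nonneg (d r ρ : ℕ) : 0 ≤ decayRatio d r ρ :=
  div_nonneg (Real.rpow_nonneg (by positivity) _) (decayMin_pos d r).le

theorem decay_div_le_decayRatio (hx : x ∉ cube d ρ) : decay x / decayMin d r ≤ decayRatio d r ρ :=
  div_le_div_of_nonneg_right (Real.rpow_le_rpow_of_nonpos (by positivity)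
    (by linarith [add_one_sq_le_nsq_of_notMem_cube hx]) (by norm_num)) (decayMin_pos d r).le

theorem one_sub_decay_div_le_escapeProb_cube (hd : 3 ≤ d) (x : Lat d) :
    1 - decay x / decayMin d r ≤ escapeProb (cube d r) x := by
  have hm := decayMin_pos d r
  refine one_sub_le_escapeProb (w := fun y => decay y / decayMin d r)
    (Set.indicator_le' (fun y hy => ?_) fun y _ => (div_pos (decay_pos y) hm).le) (fun y _ => ?_) x
  · exact (one_le_div hm).2 (decayMin_le_decay hy)
  · simp only [div_eq_inv_mul]
    rw [avg_const_mul]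
    exact mul_le_mul_of_nonneg_left (avg_decay_le hd y) (inv_nonneg.2 hm.le)

theorem one_sub_decayRatio_le_escapeProb_cube (hd : 3 ≤ d) (hx : x ∉ cube d ρ) :
    1 - decayRatio d r ρ ≤ escapeProb (cube d r) x :=
  (sub_le_sub_left (decay_div_le_decayRatio hx) 1).trans
    (one_sub_decay_div_le_escapeProb_cube hd x)

theorem escapeProb_cube_pos_of_lt_nsq (hd : 3 ≤ d) (hx : d * (r : ℝ) ^ 2 < nsq x) :
    0 < escapeProb (cube d r) x := by
  refine lt_of_lt_of_le ?_ (one_sub_decay_div_le_escapeProb_cube hd x)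
  rw [sub_pos, div_lt_one (decayMin_pos d r)]
  exact Real.rpow_lt_rpow_of_neg (by positivity) (by linarith) (by norm_num)

theorem exists_adj_abs_apply_eq (x : Lat d) (i : Fin d) : ∃ y, adj x y ∧ |y i| = |x i| + 1 := by
  rcases le_total 0 (x i) with h | h
  · refine ⟨_, adj_add_single x i, ?_⟩
    rw [Pi.add_apply, Pi.single_eq_same, abs_of_nonneg h, abs_of_nonneg (by omega)]
  · refine ⟨_, adj_sub_single x i, ?_⟩
    rw [Pi.sub_apply, Pi.single_eq_same, abs_of_nonpos h, abs_of_nonpos (by omega)]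
    ring

theorem escapeProb_cube_pos (hd : 3 ≤ d) (hx : x ∉ cube d r) : 0 < escapeProb (cube d r) x := by
  obtain ⟨i, hi⟩ : ∃ i, (r : ℤ) < |x i| := by
    by_contra! h
    exact hx h
  suffices key : ∀ (k : ℕ) (y : Lat d), (r : ℤ) < |y i| → (d * r : ℤ) ≤ |y i| + k →
      0 < escapeProb (cube d r) y from
    key (d * r) x hi (by push_cast; linarith [abs_nonneg (x i)])
  intro k
  induction k with
  | zero =>
    intro y hr hdr
    refine escapeProb_cube_pos_of_lt_nsq hd (lt_of_lt_of_le ?_ (sq_le_nsq y i))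
    have : (d * r ^ 2 : ℤ) < |y i| ^ 2 := by
      rw [Nat.cast_zero, add_zero] at hdr
      calc (d * r ^ 2 : ℤ) = d * r * r := by ring
        _ ≤ |y i| * r := by gcongr
        _ < |y i| * |y i| := by
          gcongr
          exact (Int.natCast_nonneg r).trans_lt hr
        _ = |y i| ^ 2 := (sq _).symm
    rw [sq_abs] at this
    exact_mod_cast this
  | succ k ih =>
    intro y hr hdr
    obtain ⟨z, hyz, hz⟩ := exists_adj_abs_apply_eq y i
    have hpos := ih z (by omega) (by push_cast at hdr; omega)
    rw [← isHarmonicOn_escapeProb (by omega) y (show y ∉ cube d r from fun h => hr.not_ge (h i))]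
    exact (div_pos hpos (by positivity)).trans_le
      (div_le_avg_of_adj (escapeProb_nonneg (by omega)) hyz)

theorem noReturnProb_cube_pos (hd : 3 ≤ d) (hx : x ∈ intBdry adj (cube d r)) :
    0 < noReturnProb (cube d r) x :=
  let ⟨_, _, hy, hxy⟩ := hx
  (div_pos (escapeProb_cube_pos hd hy) (by positivity)).trans_le
    (div_le_avg_of_adj (escapeProb_nonneg (by omega)) hxy)

end Cube

section LocalComparison

variable {d r ρ : ℕ} {x : Lat d} {u v w : Lat d → ℝ}

theorem le_mul_decay_div_of_le_avg (hd : 3 ≤ d) {D : Set (Lat d)} (hD : D.Finite) {M : ℝ}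
    (hM : 0 ≤ M) (hw : ∀ x ∈ D \ cube d r, w x ≤ avg w x) (hr : ∀ x ∈ cube d r, w x ≤ M)
    (hout : ∀ x, x ∉ D → w x ≤ 0) (x : Lat d) : w x ≤ M * (decay x / decayMin d r) := by
  have hm := decayMin_pos d r
  have hbase : ∀ y, y ∉ D \ cube d r → w y ≤ M * (decay y / decayMin d r) := by
    intro y hy
    by_cases hyr : y ∈ cube d r
    · exact (hr y hyr).trans (le_mul_of_one_le_right hM ((one_le_div hm).2 (decayMin_le_decay hyr)))
    · exact (hout y fun h => hy ⟨h, hyr⟩).trans (mul_nonneg hM (div_pos (decay_pos y) hm).le)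
  by_cases hx : x ∈ D \ cube d r
  · refine le_of_le_avg_of_avg_le (w := fun y => M * (decay y / decayMin d r)) (hD.sdiff) hw
      (fun y _ => ?_) (fun _ _ y _ hy => hbase y hy) x hx
    simp only [← mul_div_assoc, mul_div_right_comm M]
    rw [avg_const_mul]
    exact mul_le_mul_of_nonneg_left (avg_decay_le hd y) (div_nonneg hM hm.le)
  · exact hbase x hx

theorem IsHarmonicOn.le_avg_of_sdiff {V D : Set (Lat d)} (hu : IsHarmonicOn u (D \ V))
    (hu0 : ∀ x, 0 ≤ u x) (hV : ∀ x ∈ V, u x = 0) (hx : x ∈ D) : u x ≤ avg u x := by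
  by_cases hxV : x ∈ V
  · exact (hV x hxV).trans_le (avg_nonneg hu0 x)
  · exact (hu x ⟨hx, hxV⟩).ge

theorem harmonicMajorant_sub_le (hd : 3 ≤ d) {D : Set (Lat d)} (hD : D.Finite) {M M' : ℝ}
    (hu : ∀ x, u x ∈ Set.Icc 0 M) (hur : ∀ x ∈ cube d r, u x = 0)
    (huh : IsHarmonicOn u (D \ cube d r)) (hM' : 0 ≤ M')
    (hle : ∀ x ∈ cube d r, harmonicMajorant D u x ≤ M') (y : Lat d) :
    harmonicMajorant D u y - u y ≤ M' * (decay y / decayMin d r) := by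
  have hU : IsHarmonicOn (harmonicMajorant D u) D :=
    isHarmonicOn_harmonicMajorant (by omega) (fun x => (hu x).2)
      fun x hx => huh.le_avg_of_sdiff (fun y => (hu y).1) hur hx
  refine le_mul_decay_div_of_le_avg (w := fun y => harmonicMajorant D u y - u y) hd hD hM'
    (fun x hx => ?_) (fun x hx => ?_) (fun x hx => ?_) y
  · rw [avg_sub, hU x hx.1, huh x hx]
  · rw [hur x hx, sub_zero]
    exact hle x hx
  · exact sub_nonpos.2 (harmonicMajorant_of_notMem hx).le

/-- Filling in the cube of radius `r` with the harmonic majorant `U` of `u` gives a function to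
which Harnack's inequality and the gradient estimate apply; `U - u` is controlled by the decay. -/
theorem exists_nearly_constant (hd : 3 ≤ d) : ∃ K : ℝ, 0 < K ∧ ∀ r ρ L : ℕ, r ≤ ρ → ρ + 1 ≤ L →
    ∀ (u : Lat d → ℝ) (M : ℝ), (∀ x, u x ∈ Set.Icc 0 M) → (∀ x ∈ cube d r, u x = 0) →
    IsHarmonicOn u (cube d (5 * d * (2 * L + 1)) \ cube d r) →
    ∃ a : ℝ, 0 ≤ a ∧ ∀ y ∈ cube d (ρ + 1) \ cube d ρ,
      a * (1 - K * (decayRatio d r ρ + (ρ + 1) / (L + 1))) ≤ u y ∧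
      u y ≤ a * (1 + K * ((ρ + 1) / (L + 1))) := by
  have hd0 : 0 < d := by omega
  obtain ⟨C, hC, harnack⟩ := exists_harnack (show 2 ≤ d by omega)
  refine ⟨4 * d ^ 2 * C + C, by positivity, fun r ρ L hr hρ u M hu hur huh => ?_⟩
  have hcube : cube d (2 * L + 1) ⊆ cube d (5 * d * (2 * L + 1)) :=
    cube_mono (Nat.le_mul_of_pos_left _ (by omega))
  set S := cube d (5 * d * (2 * L + 1))
  set U := harmonicMajorant S u
  set a := U 0
  set δ := decayRatio d r ρ
  set t : ℝ := (ρ + 1) / (L + 1) with ht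
  have hU : IsHarmonicOn U S := isHarmonicOn_harmonicMajorant hd0 (fun x => (hu x).2)
    fun x hx => huh.le_avg_of_sdiff (fun y => (hu y).1) hur hx
  have huU : ∀ x, u x ≤ U x := le_harmonicMajorant hd0 fun x => (hu x).2
  have hU0 : ∀ x, 0 ≤ U x := fun x => (hu x).1.trans (huU x)
  have hUC : ∀ y ∈ cube d (2 * L + 1), U y ≤ C * a := harnack _ (by omega) U hU0 hU
  have hCa : 0 ≤ C * a := mul_nonneg hC.le (hU0 0)
  have hgradient : ∀ y ∈ cube d (ρ + 1), |U y - a| ≤ 4 * d ^ 2 * C * a * t := fun y hy => by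
    refine (abs_sub_apply_zero_le (fun x hx => hU x (hcube (cube_mono (by omega) hx)))
      (fun x hx => ⟨hU0 x, hUC x hx⟩) hρ hy).trans_eq ?_
    rw [ht]
    push_cast
    ring
  have hfill := harmonicMajorant_sub_le hd (finite_cube _) hu hur huh hCa
    fun x hx => hUC x (cube_mono (by omega) hx)
  refine ⟨a, hU0 0, fun y hy => ?_⟩
  have hUa := abs_le.1 (hgradient y hy.1)
  have hδ := mul_le_mul_of_nonneg_left (decay_div_le_decayRatio (r := r) hy.2) hCa
  have hδ0 : 0 ≤ d ^ 2 * (C * a) * δ := by have := decayRatio_nonneg d r ρ; positivity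
  have ht0 : 0 ≤ C * a * t := by positivity
  constructor
  · linarith [hfill y, hUa.1]
  · linarith [huU y, hUa.2]

theorem avg_le_avg_of_le_on_extBdry {V W : Set (Lat d)} (hW : W.Finite)
    (hv : ∀ x ∈ W \ V, v x ≤ avg v x) (hw : ∀ x ∈ W \ V, avg w x ≤ w x)
    (hV : ∀ x ∈ V, v x ≤ w x) (hout : ∀ x ∈ extBdry adj W, v x ≤ w x) (hx : x ∈ W) :
    avg v x ≤ avg w x := by
  have hbdry : ∀ z ∈ W, ∀ y, adj z y → y ∉ W \ V → v y ≤ w y := fun z hz y hzy hy => by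
    by_cases hyV : y ∈ V
    · exact hV y hyV
    · exact hout y ⟨fun h => hy ⟨h, hyV⟩, z, hz, hzy⟩
  have hle := le_of_le_avg_of_avg_le hW.sdiff hv hw fun z hz => hbdry z hz.1
  refine avg_mono_of_adj fun y hxy => ?_
  by_cases hy : y ∈ W \ V
  · exact hle y hy
  · exact hbdry x hx y hxy hy

theorem mul_noReturnProb_le_avg (hd : 0 < d) {V W : Set (Lat d)} (hW : W.Finite)
    (hu : IsHarmonicOn u (W \ V)) (hV : ∀ x ∈ V, 0 ≤ u x) {b : ℝ}
    (hout : ∀ y ∈ extBdry adj W, b * escapeProb V y ≤ u y) (hx : x ∈ W) :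
    b * noReturnProb V x ≤ avg u x := by
  rw [noReturnProb, ← avg_const_mul]
  refine avg_le_avg_of_le_on_extBdry (V := V) hW (fun y hy => ?_) (fun y hy => (hu y hy).le)
    (fun y hy => ?_) hout hx
  · rw [avg_const_mul, isHarmonicOn_escapeProb hd y hy.2]
  · rw [escapeProb_of_mem hy, mul_zero]
    exact hV y hy

theorem avg_le_mul_noReturnProb (hd : 0 < d) {V W : Set (Lat d)} (hW : W.Finite)
    (hu : IsHarmonicOn u (W \ V)) (hV : ∀ x ∈ V, u x ≤ 0) {b : ℝ}
    (hout : ∀ y ∈ extBdry adj W, u y ≤ b * escapeProb V y) (hx : x ∈ W) :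
    avg u x ≤ b * noReturnProb V x := by
  rw [noReturnProb, ← avg_const_mul]
  refine avg_le_avg_of_le_on_extBdry (V := V) hW (fun y hy => (hu y hy).ge) (fun y hy => ?_)
    (fun y hy => ?_) hout hx
  · rw [avg_const_mul, isHarmonicOn_escapeProb hd y hy.2]
  · rw [escapeProb_of_mem hy, mul_zero]
    exact hV y hy

theorem mem_cube_sdiff_of_mem_extBdry (hx : x ∈ extBdry adj (cube d ρ)) :
    x ∈ cube d (ρ + 1) \ cube d ρ :=
  let ⟨hxρ, _, hy, hyx⟩ := hx
  ⟨mem_cube_succ_of_adj hy hyx, hxρ⟩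

/-- The relative error made when comparing a harmonic function outside the cube of radius `r` with
the escape probability: the first term accounts for walks that return to that cube from distance
`ρ`, the second one for the oscillation at distance `ρ` of harmonic functions in a cube of radius of
order `L`. -/
def comparisonError (d r ρ L : ℕ) : ℝ := decayRatio d r ρ + (ρ + 1) / (L + 1)

theorem comparisonError_nonneg (d r ρ L : ℕ) : 0 ≤ comparisonError d r ρ L :=
  add_nonneg (decayRatio_nonneg d r ρ) (by positivity)

theorem exists_local_comparison (hd : 3 ≤ d) : ∃ C : ℝ, 0 < C ∧ ∀ r ρ L : ℕ, r ≤ ρ → ρ + 1 ≤ L →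
    C * comparisonError d r ρ L ≤ 1 / 2 →
    ∀ (u : Lat d → ℝ) (M : ℝ), (∀ x, u x ∈ Set.Icc 0 M) → (∀ x ∈ cube d r, u x = 0) →
    IsHarmonicOn u (cube d (5 * d * (2 * L + 1)) \ cube d r) → ∃ a : ℝ, 0 ≤ a ∧ ∀ x ∈ cube d r,
      a * (1 - C * comparisonError d r ρ L) * noReturnProb (cube d r) x ≤ avg u x ∧
      avg u x ≤ a * (1 + C * comparisonError d r ρ L) * noReturnProb (cube d r) x := by
  have hd0 : 0 < d := by omega
  obtain ⟨K, hK, nearly_constant⟩ := exists_nearly_constant hd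
  refine ⟨2 * K + 2, by linarith, fun r ρ L hr hρ hsmall u M hu hur huh => ?_⟩
  rw [comparisonError] at hsmall ⊢
  obtain ⟨a, ha, hshell⟩ := nearly_constant r ρ L hr hρ u M hu hur huh
  set δ := decayRatio d r ρ
  set t : ℝ := (ρ + 1) / (L + 1)
  have hδ : 0 ≤ δ := decayRatio_nonneg d r ρ
  have ht : 0 ≤ t := by positivity
  have hKδ := mul_nonneg hK.le hδ
  have hKt := mul_nonneg hK.le ht
  have hlower : 1 - (2 * K + 2) * (δ + t) ≤ 1 - K * (δ + t) := by linarith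
  have hupper : 1 + K * t ≤ (1 + (2 * K + 2) * (δ + t)) * (1 - δ) := by
    linarith [mul_le_mul_of_nonneg_right hsmall hδ]
  have huρ : IsHarmonicOn u (cube d ρ \ cube d r) := fun x hx =>
    huh x ⟨cube_mono (by nlinarith) hx.1, hx.2⟩
  refine ⟨a, ha, fun x hx => ⟨?_, ?_⟩⟩
  · refine mul_noReturnProb_le_avg hd0 (finite_cube ρ) huρ (fun y _ => (hu y).1) (fun y hy => ?_)
      (cube_mono hr hx)
    calc a * (1 - (2 * K + 2) * (δ + t)) * escapeProb (cube d r) y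
        ≤ a * (1 - (2 * K + 2) * (δ + t)) :=
          mul_le_of_le_one_right (mul_nonneg ha (by linarith)) (escapeProb_le_one hd0 y)
      _ ≤ a * (1 - K * (δ + t)) := mul_le_mul_of_nonneg_left hlower ha
      _ ≤ u y := (hshell y (mem_cube_sdiff_of_mem_extBdry hy)).1
  · refine avg_le_mul_noReturnProb hd0 (finite_cube ρ) huρ (fun y hy => (hur y hy).le)
      (fun y hy => ?_) (cube_mono hr hx)
    calc u y ≤ a * (1 + K * t) := (hshell y (mem_cube_sdiff_of_mem_extBdry hy)).2
      _ ≤ a * ((1 + (2 * K + 2) * (δ + t)) * (1 - δ)) := mul_le_mul_of_nonneg_left hupper ha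
      _ = a * (1 + (2 * K + 2) * (δ + t)) * (1 - δ) := by ring
      _ ≤ a * (1 + (2 * K + 2) * (δ + t)) * escapeProb (cube d r) y :=
          mul_le_mul_of_nonneg_left (one_sub_decayRatio_le_escapeProb_cube hd hy.1) (by positivity)

end LocalComparison

/-! ### The Green function of the killed walk -/

section Sum

variable {d : ℕ} {R : Type*} [AddCommGroupWithOne R] [Fintype R]

theorem sum_avg_mul (v w : (Fin d → R) → ℝ) : ∑ x, avg v x * w x = ∑ x, v x * avg w x := by
  have hadd (i : Fin d) (v w : (Fin d → R) → ℝ) :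
      ∑ x, v (x + Pi.single i 1) * w x = ∑ x, v x * w (x - Pi.single i 1) :=
    Fintype.sum_equiv (Equiv.addRight (Pi.single i 1)) _ _ fun x => by simp
  have hsub (i : Fin d) (v w : (Fin d → R) → ℝ) :
      ∑ x, v (x - Pi.single i 1) * w x = ∑ x, v x * w (x + Pi.single i 1) :=
    Fintype.sum_equiv (Equiv.subRight (Pi.single i 1)) _ _ fun x => by simp
  simp only [avg, div_mul_eq_mul_div, mul_div_assoc', ← Finset.sum_div, Finset.sum_mul,
    Finset.mul_sum, add_mul, mul_add]
  congr 1
  rw [Finset.sum_comm, Finset.sum_comm (s := Finset.univ (α := Fin d → R))]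
  refine Finset.sum_congr rfl fun i _ => ?_
  rw [Finset.sum_add_distrib, Finset.sum_add_distrib, hadd, hsub, add_comm]

theorem sum_avg (hd : 0 < d) (v : (Fin d → R) → ℝ) : ∑ x, avg v x = ∑ x, v x := by
  simpa only [avg_const hd, mul_one] using sum_avg_mul v fun _ => 1

end Sum

section KilledMass

variable {d : ℕ} {R : Type*} [AddGroupWithOne R] {A : Set (Fin d → R)} {σ : (Fin d → R) → ℝ}

/-- `killedMass A σ n x` is the mass at `x` at time `n` of the walk with initial distribution `σ`
killed on `A`; mass starting in `A` is killed at time `0`. -/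
def killedMass (A : Set (Fin d → R)) (σ : (Fin d → R) → ℝ) : ℕ → (Fin d → R) → ℝ
  | 0 => Aᶜ.indicator σ
  | n + 1 => Aᶜ.indicator (avg (killedMass A σ n))

theorem killedMass_nonneg (hσ : ∀ x, 0 ≤ σ x) : ∀ n x, 0 ≤ killedMass A σ n x
  | 0 => Set.indicator_nonneg fun x _ => hσ x
  | n + 1 => Set.indicator_nonneg fun x _ => avg_nonneg (killedMass_nonneg hσ n) x

theorem killedMass_of_mem {x : Fin d → R} (hx : x ∈ A) :
    ∀ n, killedMass A σ n x = 0
  | 0 => Set.indicator_of_notMem (Set.notMem_compl_iff.2 hx) _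
  | _ + 1 => Set.indicator_of_notMem (Set.notMem_compl_iff.2 hx) _

/-- The Green function of the walk with initial distribution `σ` killed on `A`: the expected number
of visits to `x` before entering `A`. -/
def green (A : Set (Fin d → R)) (σ : (Fin d → R) → ℝ) (x : Fin d → R) : ℝ :=
  ∑' n, killedMass A σ n x

theorem green_nonneg (hσ : ∀ x, 0 ≤ σ x) (x : Fin d → R) : 0 ≤ green A σ x :=
  tsum_nonneg fun n => killedMass_nonneg hσ n x

theorem green_of_mem {x : Fin d → R} (hx : x ∈ A) : green A σ x = 0 := by
  simp only [green, killedMass_of_mem hx, tsum_zero]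

end KilledMass

section Torus

variable {d N : ℕ} {A : Set (Torus d N)} {σ : Torus d N → ℝ}

theorem sum_val_sub_single [NeZero N] {x : Torus d N} {i : Fin d} (hx : x i ≠ 0) :
    ∑ j, ((x - Pi.single i 1 : Torus d N) j).val + 1 = ∑ j, (x j).val := by
  have hi : 1 ≤ (x i).val := Nat.one_le_iff_ne_zero.2 ((ZMod.val_ne_zero _).2 hx)
  have hN1 : N ≠ 1 := by
    rintro rfl
    exact hx (Subsingleton.elim _ _)
  have hone : (1 : ZMod N).val = 1 := ZMod.val_one'' hN1
  have hval : ((x - Pi.single i 1 : Torus d N) i).val = (x i).val - 1 := by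
    rw [Pi.sub_apply, Pi.single_eq_same, ZMod.val_sub (hi.trans' hone.le), hone]
  rw [← Finset.add_sum_erase _ _ (Finset.mem_univ i), hval,
    ← Finset.add_sum_erase _ (fun j => (x j).val) (Finset.mem_univ i),
    Finset.sum_congr rfl (g := fun j => (x j).val) fun j hj => by
      rw [Pi.sub_apply, Pi.single_eq_of_ne (Finset.ne_of_mem_erase hj), sub_zero]]
  omega

/-- Witness: `g x = 1 - q ^ D x` with `D x` the `ℓ¹`-norm of the representative of `x - b` in
`[0, N)^d` and `q` so small that a single neighbour closer to `b` dominates the average. -/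
theorem exists_avg_le_sub [NeZero N] (b : Torus d N) : ∃ (g : Torus d N → ℝ) (c : ℝ),
    0 < c ∧ (∀ x, 0 ≤ g x) ∧ ∀ x, x ≠ b → avg g x ≤ g x - c := by
  set q : ℝ := 1 / (4 * d + 1) with hq
  have hq0 : 0 < q := by positivity
  have hq1 : q ≤ 1 := (div_le_one (by positivity)).2 (by linarith [(Nat.cast_nonneg d : (0:ℝ) ≤ d)])
  let D : Torus d N → ℕ := fun x => ∑ i, ((x - b) i).val
  have hDle (x) : D x ≤ d * N := by
    refine (Finset.sum_le_card_nsmul _ _ N fun i _ => (ZMod.val_lt _).le).trans_eq ?_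
    rw [Finset.card_univ, Fintype.card_fin, smul_eq_mul]
  refine ⟨fun x => 1 - q ^ D x, q ^ (d * N), by positivity,
    fun x => sub_nonneg.2 (pow_le_one₀ hq0.le hq1), fun x hx => ?_⟩
  obtain ⟨i, hi⟩ : ∃ i, (x - b) i ≠ 0 := Function.ne_iff.1 (sub_ne_zero.2 hx)
  have hd : 0 < d := i.pos
  have : Nontrivial (ZMod N) := ⟨_, _, hi⟩
  have hstep : D (x - Pi.single i 1) + 1 = D x := by
    simp only [D, sub_right_comm _ (Pi.single i 1)]
    exact sum_val_sub_single hi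
  have hneighbour : 2 * q ^ D x ≤ q ^ D (x - Pi.single i 1) / (2 * d) := by
    rw [← hstep, pow_succ, le_div_iff₀ (by positivity),
      show 2 * (q ^ D (x - Pi.single i 1) * q) * (2 * d) =
        q ^ D (x - Pi.single i 1) * (4 * d * q) by ring]
    refine mul_le_of_le_one_right (by positivity) ?_
    rw [hq, mul_one_div]
    exact (div_le_one (by positivity)).2 (by linarith)
  have havg := div_le_avg_of_adj (w := fun x => q ^ D x) (fun x => by positivity)
    (adj_sub_single x i)
  have hmin : q ^ (d * N) ≤ q ^ D x := pow_le_pow_of_le_one hq0.le hq1 (hDle x)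
  rw [avg_sub, avg_const hd]
  linarith

/-- Pairing the killed walk with a strictly superharmonic function `g` bounds the total mass that
it ever carries by `∑ x, σ x * g x`. -/
theorem summable_killedMass [NeZero N] (hA : A.Nonempty) (hσ : ∀ x, 0 ≤ σ x) (x : Torus d N) :
    Summable fun n => killedMass A σ n x := by
  obtain ⟨b, hb⟩ := hA
  obtain ⟨g, c, hc, hg0, hg⟩ := exists_avg_le_sub b
  set κ := killedMass A σ
  have hκ : ∀ n x, 0 ≤ κ n x := killedMass_nonneg hσ
  have hstep (n : ℕ) : c * κ n x ≤ ∑ y, κ n y * g y - ∑ y, κ (n + 1) y * g y :=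
    calc c * κ n x ≤ ∑ y, c * κ n y :=
        Finset.single_le_sum (f := fun y => c * κ n y)
          (fun y _ => mul_nonneg hc.le (hκ n y)) (Finset.mem_univ x)
      _ ≤ ∑ y, (κ n y * g y - κ n y * avg g y) := by
        refine Finset.sum_le_sum fun y _ => ?_
        by_cases hy : y ∈ A
        · simp only [κ, killedMass_of_mem hy, mul_zero, zero_mul, sub_zero, le_refl]
        · linarith [mul_le_mul_of_nonneg_left (hg y fun h => hy (h ▸ hb)) (hκ n y)]
      _ = ∑ y, κ n y * g y - ∑ y, avg (κ n) y * g y := by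
        rw [Finset.sum_sub_distrib, sum_avg_mul]
      _ ≤ ∑ y, κ n y * g y - ∑ y, κ (n + 1) y * g y := by
        gcongr with y
        · exact hg0 y
        · exact Set.indicator_le_self' (fun y _ => avg_nonneg (hκ n) y) y
  refine (summable_mul_left_iff hc.ne').1
    (summable_of_sum_range_le (c := ∑ y, κ 0 y * g y) (fun n => mul_nonneg hc.le (hκ n x))
      fun n => ?_)
  calc ∑ i ∈ Finset.range n, c * κ i x
      ≤ ∑ y, κ 0 y * g y - ∑ y, κ n y * g y := by
        rw [← Finset.sum_range_sub' fun n => ∑ y, κ n y * g y]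
        exact Finset.sum_le_sum fun i _ => hstep i
    _ ≤ ∑ y, κ 0 y * g y :=
        sub_le_self _ (Finset.sum_nonneg fun y _ => mul_nonneg (hκ n y) (hg0 y))

theorem hasSum_avg_killedMass [NeZero N] (hA : A.Nonempty) (hσ : ∀ x, 0 ≤ σ x) (x : Torus d N) :
    HasSum (fun n => avg (killedMass A σ n) x) (avg (green A σ) x) := by
  have h := fun x => (summable_killedMass hA hσ x).hasSum
  exact (hasSum_sum fun i _ => (h _).add (h _)).div_const _

theorem green_of_notMem [NeZero N] (hA : A.Nonempty) (hσ : ∀ x, 0 ≤ σ x) {x : Torus d N}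
    (hx : x ∉ A) : green A σ x = σ x + avg (green A σ) x := by
  rw [green, (summable_killedMass hA hσ x).tsum_eq_zero_add,
    ← (hasSum_avg_killedMass hA hσ x).tsum_eq]
  simp only [killedMass, Set.indicator_of_mem (Set.mem_compl hx)]

/-- The walk started outside `A` enters `A` almost surely. -/
theorem sum_avg_green [NeZero N] (hd : 0 < d) (hA : A.Nonempty) (hσ : ∀ x, 0 ≤ σ x) :
    ∑ x with x ∈ A, avg (green A σ) x = ∑ x with x ∉ A, σ x := by
  have hsum := sum_avg hd (green A σ)
  rw [← Finset.sum_filter_add_sum_filter_not _ (· ∈ A),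
    ← Finset.sum_filter_add_sum_filter_not _ (· ∈ A) (green A σ)] at hsum
  have hmem : ∑ x with x ∈ A, green A σ x = 0 :=
    Finset.sum_eq_zero fun x hx => green_of_mem (Finset.mem_filter.1 hx).2
  have hnotMem : ∑ x with x ∉ A, green A σ x =
      ∑ x with x ∉ A, σ x + ∑ x with x ∉ A, avg (green A σ) x := by
    rw [← Finset.sum_add_distrib]
    exact Finset.sum_congr rfl fun x hx => green_of_notMem hA hσ (Finset.mem_filter.1 hx).2
  linarith

end Torus

/-! ### Lifting from the torus to the lattice -/

section Lift

variable {d N : ℕ}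

/-- The covering map from the lattice to the torus. -/
def proj (N : ℕ) (y : Lat d) : Torus d N := fun i => (y i : ZMod N)

theorem proj_add (y z : Lat d) : proj N (y + z) = proj N y + proj N z :=
  funext fun _ => Int.cast_add _ _

theorem proj_sub (y z : Lat d) : proj N (y - z) = proj N y - proj N z :=
  funext fun _ => Int.cast_sub _ _

theorem proj_single (i : Fin d) : proj N (Pi.single i 1) = Pi.single i 1 := by
  ext j
  rw [proj, Pi.single_apply, Pi.single_apply, apply_ite Int.cast, Int.cast_one, Int.cast_zero]

theorem avg_comp_proj (u : Torus d N → ℝ) (y : Lat d) :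
    avg (fun z => u (proj N z)) y = avg u (proj N y) := by
  simp only [avg, proj_add, proj_sub, proj_single]

theorem exists_adj_proj_eq {x : Lat d} {y : Torus d N} (h : adj (proj N x) y) :
    ∃ z, adj x z ∧ proj N z = y := by
  have : Nontrivial (ZMod N) :=
    let ⟨i, hi⟩ := Function.ne_iff.1 h.1
    ⟨_, _, hi⟩
  obtain ⟨i, rfl | rfl⟩ := adj_iff_exists_single.1 h
  · exact ⟨_, adj_add_single x i, by rw [proj_add, proj_single]⟩
  · exact ⟨_, adj_sub_single x i, by rw [proj_sub, proj_single]⟩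

variable [NeZero N]

theorem torusToLat_apply (x : Torus d N) (i : Fin d) : torusToLat x i = (x i).valMinAbs := by
  have : ((x i).val : ℝ) ≤ (N : ℝ) / 2 ↔ (x i).val ≤ N / 2 := by
    rw [le_div_iff₀ two_pos, Nat.le_div_iff_mul_le two_pos]
    exact_mod_cast Iff.rfl
  rw [torusToLat, ZMod.valMinAbs_def_pos, if_congr this rfl rfl]

theorem proj_torusToLat (x : Torus d N) : proj N (torusToLat x) = x := by
  ext i
  rw [proj, torusToLat_apply, ZMod.coe_valMinAbs]

theorem torusToLat_proj {L : ℕ} (hL : 2 * L < N) {y : Lat d} (hy : y ∈ cube d L) :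
    torusToLat (proj N y) = y := by
  ext i
  have := abs_le.1 (hy i)
  rw [torusToLat_apply, ZMod.valMinAbs_spec]
  exact ⟨rfl, by omega, by omega⟩

theorem natAbs_torusToLat_apply (x : Torus d N) (i : Fin d) :
    (torusToLat x i).natAbs = min (0 - x i).val (x i - 0).val := by
  rw [torusToLat_apply, ZMod.valMinAbs_natAbs_eq_min, zero_sub, sub_zero, ZMod.neg_val]
  split_ifs with h
  · rw [h, ZMod.val_zero, Nat.zero_min, Nat.min_self]
  · exact min_comm _ _

variable {ρ : ℝ}

theorem mem_torusBall_zero_iff (hρ : 0 ≤ ρ) (x : Torus d N) :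
    x ∈ torusBall (0 : Torus d N) ρ ↔ torusToLat x ∈ cube d ⌊ρ⌋₊ := by
  change (torusDist 0 x : ℝ) ≤ ρ ↔ ∀ i, |torusToLat x i| ≤ (⌊ρ⌋₊ : ℤ)
  simp only [← Nat.le_floor_iff hρ, torusDist, Finset.sup_le_iff, Finset.mem_univ, true_imp_iff,
    Int.abs_eq_natAbs, natAbs_torusToLat_apply, Nat.cast_le, Pi.zero_apply]

theorem proj_mem_torusBall_zero_iff (hρ : 0 ≤ ρ) {L : ℕ} (hL : 2 * L < N) {y : Lat d}
    (hy : y ∈ cube d L) : proj N y ∈ torusBall (0 : Torus d N) ρ ↔ y ∈ cube d ⌊ρ⌋₊ := by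
  rw [mem_torusBall_zero_iff hρ, torusToLat_proj hL hy]

theorem zero_mem_torusBall_zero (hρ : 0 ≤ ρ) : (0 : Torus d N) ∈ torusBall 0 ρ := by
  rw [mem_torusBall_zero_iff hρ]
  intro i
  rw [torusToLat_apply, Pi.zero_apply, ZMod.valMinAbs_zero, abs_zero]
  exact Int.natCast_nonneg _

theorem torusToLat_image_torusBall_zero (hρ : 0 ≤ ρ) (hN : 2 * ⌊ρ⌋₊ < N) :
    torusToLat '' torusBall (0 : Torus d N) ρ = cube d ⌊ρ⌋₊ := by
  refine Set.Subset.antisymm (Set.image_subset_iff.2 fun x => (mem_torusBall_zero_iff hρ x).1)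
    fun y hy => ⟨proj N y, ?_, torusToLat_proj hN hy⟩
  exact (proj_mem_torusBall_zero_iff hρ hN hy).2 hy

theorem torusToLat_mem_intBdry_cube (hρ : 0 ≤ ρ) (hN : 2 * (⌊ρ⌋₊ + 1) < N) {x : Torus d N}
    (hx : x ∈ intBdry adj (torusBall (0 : Torus d N) ρ)) :
    torusToLat x ∈ intBdry adj (cube d ⌊ρ⌋₊) := by
  obtain ⟨hxA, y, hyA, hxy⟩ := hx
  have hx := (mem_torusBall_zero_iff hρ x).1 hxA
  rw [← proj_torusToLat x] at hxy
  obtain ⟨z, hxz, rfl⟩ := exists_adj_proj_eq hxy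
  refine ⟨hx, z, fun hz => hyA ?_, hxz⟩
  exact (proj_mem_torusBall_zero_iff hρ hN (mem_cube_succ_of_adj hx hxz)).2 hz

theorem sum_cube_comp_proj (hρ : 0 ≤ ρ) (hN : 2 * ⌊ρ⌋₊ < N) (f : Torus d N → ℝ) :
    ∑ y ∈ (finite_cube (d := d) ⌊ρ⌋₊).toFinset, f (proj N y) =
      ∑ x with x ∈ torusBall (0 : Torus d N) ρ, f x := by
  refine Finset.sum_nbij' (proj N) torusToLat (fun y hy => ?_) (fun x hx => ?_) (fun y hy => ?_)
    (fun x _ => proj_torusToLat x) fun _ _ => rfl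
  · rw [Set.Finite.mem_toFinset] at hy
    exact Finset.mem_filter.2
      ⟨Finset.mem_univ _, (proj_mem_torusBall_zero_iff hρ hN hy).2 hy⟩
  · rw [Set.Finite.mem_toFinset]
    exact (mem_torusBall_zero_iff hρ x).1 (Finset.mem_filter.1 hx).2
  · rw [Set.Finite.mem_toFinset] at hy
    exact torusToLat_proj hN hy

end Lift

/-! ### Cylinder probabilities of the discrete-time walk -/

instance (n : ℕ) : MeasurableSingletonClass (ZMod n) := ⟨fun _ => trivial⟩

section Step

variable {d : ℕ} {R : Type*} [AddGroupWithOne R]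

theorem srwStep_comm (x y : Fin d → R) : srwStep x y = srwStep y x := by
  simp only [srwStep, adj_comm]

theorem injective_sumElim_add_single_sub_single (hR : (1 : R) ≠ -1) (x : Fin d → R) :
    Function.Injective
      (Sum.elim (fun i => x + Pi.single i 1) fun i => x - Pi.single i (1 : R)) := by
  have h1 : (1 : R) ≠ 0 := fun h => hR (by rw [h, neg_zero])
  have hsingle {i j : Fin d} (h : (Pi.single i 1 : Fin d → R) = Pi.single j 1) : i = j := by
    by_contra hij
    exact h1 (by simpa [hij] using congrFun h i)
  refine Function.Injective.sumElim (fun i j h => hsingle (add_left_cancel h))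
    (fun i j h => hsingle (sub_right_injective h)) fun i j h => ?_
  have hij : (Pi.single i 1 : Fin d → R) = -Pi.single j 1 :=
    add_left_cancel (h.trans (sub_eq_add_neg _ _))
  obtain rfl | hne := eq_or_ne i j
  · exact hR (by simpa using congrFun hij i)
  · exact h1 (by simpa [hne] using congrFun hij i)

theorem tsum_srwStep_mul (hR : (1 : R) ≠ -1) (F : (Fin d → R) → ℝ≥0∞) (x : Fin d → R) :
    ∑' y, srwStep x y * F y =
      (∑ i, (F (x + Pi.single i 1) + F (x - Pi.single i 1))) * ((2 * d : ℕ) : ℝ≥0∞)⁻¹ := by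
  have : NeZero (1 : R) := ⟨fun h => hR (by rw [h, neg_zero])⟩
  have hsupp : Function.support (fun y => srwStep x y * F y) ⊆
      Set.range (Sum.elim (fun i => x + Pi.single i 1) fun i => x - Pi.single i (1 : R)) := by
    intro y hy
    have hadj : adj x y := by
      by_contra h
      exact hy (by simp only [srwStep, if_neg h, zero_mul])
    obtain ⟨i, rfl | rfl⟩ := adj_iff_exists_single.1 hadj
    · exact ⟨Sum.inl i, rfl⟩
    · exact ⟨Sum.inr i, rfl⟩
  rw [← (injective_sumElim_add_single_sub_single hR x).tsum_eq hsupp, tsum_fintype,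
    Fintype.sum_sum_type, ← Finset.sum_add_distrib, Finset.sum_mul]
  refine Finset.sum_congr rfl fun i _ => ?_
  simp only [Sum.elim_inl, Sum.elim_inr, srwStep, adj_add_single, adj_sub_single, if_true]
  ring

theorem tsum_srwStep_mul_ofReal (hd : 0 < d) (hR : (1 : R) ≠ -1) {w : (Fin d → R) → ℝ}
    (hw : ∀ x, 0 ≤ w x) (x : Fin d → R) :
    ∑' y, srwStep x y * ENNReal.ofReal (w y) = ENNReal.ofReal (avg w x) := by
  rw [tsum_srwStep_mul hR, avg, ENNReal.ofReal_div_of_pos (by positivity), div_eq_mul_inv,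
    ENNReal.ofReal_sum_of_nonneg fun i _ => add_nonneg (hw _) (hw _)]
  congr 1
  · exact Finset.sum_congr rfl fun i _ => (ENNReal.ofReal_add (hw _) (hw _)).symm
  · rw [← ENNReal.ofReal_natCast, Nat.cast_mul, Nat.cast_ofNat]

/-- The probability that the walk with initial law `init` is in `S k` at each time `k < n` and at
`y` at time `n`, computed by the forward recursion. -/
def pathMass (S : ℕ → Set (Fin d → R)) (init : (Fin d → R) → ℝ≥0∞) : ℕ → (Fin d → R) → ℝ≥0∞
  | 0, y => init y
  | n + 1, y => ∑' z : S n, pathMass S init n z * srwStep z.1 y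

theorem tsum_pathMass_mul_avg (hd : 0 < d) (hR : (1 : R) ≠ -1) {w : (Fin d → R) → ℝ}
    (hw : ∀ x, 0 ≤ w x) (S : ℕ → Set (Fin d → R)) (init : (Fin d → R) → ℝ≥0∞) (n : ℕ) :
    ∑' y : S n, pathMass S init n y * ENNReal.ofReal (avg w y) =
      ∑' z, pathMass S init (n + 1) z * ENNReal.ofReal (w z) := by
  simp_rw [pathMass, ← tsum_srwStep_mul_ofReal hd hR hw, ← ENNReal.tsum_mul_left,
    ← ENNReal.tsum_mul_right, mul_assoc]
  exact ENNReal.tsum_comm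

end Step

section PathMeasure

/-- Trajectories that are in `S k` at each time `k < n` and follow `w` from time `n` to time
`n + m`. -/
def pathEvent {α : Type*} (S : ℕ → Set α) (n m : ℕ) (w : ℕ → α) : Set (ℕ → α) :=
  {ω | (∀ k < n, ω k ∈ S k) ∧ ∀ j ≤ m, ω (n + j) = w j}

variable {α : Type*} {S : ℕ → Set α} {n m : ℕ} {w : ℕ → α}

theorem pathEvent_succ : pathEvent S (n + 1) m w =
    ⋃ z : S n, pathEvent S n (m + 1) fun j => Nat.casesOn j z.1 w := by
  ext ω
  simp only [pathEvent, Set.mem_iUnion, Set.mem_ofPred_eq]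
  constructor
  · rintro ⟨hS, hw⟩
    refine ⟨⟨ω n, hS n n.lt_succ_self⟩, fun k hk => hS k (hk.trans n.lt_succ_self), ?_⟩
    rintro (_ | j) hj
    · rfl
    · rw [← add_assoc, add_right_comm]
      exact hw j (Nat.le_of_succ_le_succ hj)
  · rintro ⟨z, hS, hw⟩
    refine ⟨fun k hk => ?_, fun j hj => ?_⟩
    · rcases Nat.lt_succ_iff_lt_or_eq.1 hk with hk | rfl
      · exact hS k hk
      · exact (hw 0 (Nat.zero_le _)).symm ▸ z.2
    · rw [add_right_comm, add_assoc]
      exact hw (j + 1) (Nat.succ_le_succ hj)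

variable [MeasurableSpace α] [MeasurableSingletonClass α]

theorem measurableSet_eval_eq (n : ℕ) (y : α) : MeasurableSet {ω : ℕ → α | ω n = y} :=
  (measurable_pi_apply n : Measurable fun ω : ℕ → α => ω n) (measurableSet_singleton y)

variable [Countable α]

theorem measurableSet_forall_lt_mem (S : ℕ → Set α) (n : ℕ) :
    MeasurableSet {ω : ℕ → α | ∀ k < n, ω k ∈ S k} :=
  measurableSet_setOfPred.2 <| .forall fun k => .forall fun _ =>
    measurableSet_setOfPred.1 (measurable_pi_apply k (.of_discrete (s := S k)))

theorem measurableSet_pathEvent : MeasurableSet (pathEvent S n m w) :=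
  (measurableSet_forall_lt_mem S n).inter <|
    measurableSet_setOfPred.2 <| .forall fun j => .forall fun _ =>
      measurableSet_setOfPred.1 (measurableSet_eval_eq (n + j) (w j))

end PathMeasure

section WalkLaw

variable {d : ℕ} {R : Type*} [AddGroupWithOne R] [MeasurableSpace R] [MeasurableSingletonClass R]
  [Countable R] {μ : Measure (ℕ → Fin d → R)} {init : (Fin d → R) → ℝ≥0∞}

theorem IsWalkLaw.measure_pathEvent (hμ : IsWalkLaw μ init) (S : ℕ → Set (Fin d → R)) (n m : ℕ)
    (w : ℕ → Fin d → R) : μ (pathEvent S n m w) =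
      pathMass S init n (w 0) * ∏ j ∈ Finset.range m, srwStep (w j) (w (j + 1)) := by
  induction n generalizing m w with
  | zero => simpa [pathEvent, pathMass] using hμ.2 m w
  | succ n ih =>
    have hdisj : Pairwise (Function.onFun Disjoint fun z : S n =>
        pathEvent S n (m + 1) fun j => Nat.casesOn j z.1 w) := fun z z' hz =>
      Set.disjoint_left.2 fun ω h h' => hz (Subtype.ext
        ((h.2 0 (Nat.zero_le _)).symm.trans (h'.2 0 (Nat.zero_le _))))
    rw [pathEvent_succ, measure_iUnion hdisj fun z => measurableSet_pathEvent, pathMass,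
      ← ENNReal.tsum_mul_right]
    refine tsum_congr fun z => ?_
    rw [ih, Finset.prod_range_succ', mul_assoc]
    exact congrArg _ (mul_comm _ _)

theorem IsWalkLaw.measure_forall_lt_and_eq (hμ : IsWalkLaw μ init) (S : ℕ → Set (Fin d → R))
    (n : ℕ) (y : Fin d → R) :
    μ {ω | (∀ k < n, ω k ∈ S k) ∧ ω n = y} = pathMass S init n y := by
  simpa [pathEvent] using hμ.measure_pathEvent S n 0 fun _ => y

theorem IsWalkLaw.measure_forall_lt_succ (hμ : IsWalkLaw μ init) (S : ℕ → Set (Fin d → R))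
    (n : ℕ) : μ {ω | ∀ k < n + 1, ω k ∈ S k} = ∑' y : S n, pathMass S init n y := by
  have hU : {ω : ℕ → Fin d → R | ∀ k < n + 1, ω k ∈ S k} =
      ⋃ y : S n, {ω | (∀ k < n, ω k ∈ S k) ∧ ω n = y.1} := by
    ext ω
    exact Nat.forall_lt_succ_right.trans (by simp)
  rw [hU, measure_iUnion]
  · exact tsum_congr fun y => hμ.measure_forall_lt_and_eq S n y
  · exact fun y y' hy => Set.disjoint_left.2 fun ω h h' =>
      hy (Subtype.ext (h.2.symm.trans h'.2))
  · exact fun y => (measurableSet_forall_lt_mem S n).inter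
      (measurableSet_eval_eq n y.1)

end WalkLaw

section Escape

variable {d : ℕ} {V : Set (Lat d)}

theorem avoidProb_nonneg (V : Set (Lat d)) (m : ℕ) (x : Lat d) : 0 ≤ avoidProb V m x := by
  induction m generalizing x with
  | zero =>
    rw [avoidProb]
    split_ifs <;> norm_num
  | succ m ih =>
    rw [avoidProb]
    split_ifs
    · exact le_rfl
    · exact avg_nonneg ih x

theorem tsum_pathMass_mul_avg_avoidProb (hd : 0 < d) {S : ℕ → Set (Lat d)}
    (hS : ∀ n, S (n + 1) = Vᶜ) (init : Lat d → ℝ≥0∞) (m n : ℕ) :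
    ∑' y : S n, pathMass S init n y * ENNReal.ofReal (avg (avoidProb V m) y) =
      ∑' y : S (n + 1 + m), pathMass S init (n + 1 + m) y := by
  induction m generalizing n with
  | zero =>
    rw [tsum_pathMass_mul_avg hd (by decide : (1 : ℤ) ≠ -1) (avoidProb_nonneg V 0),
      add_zero, tsum_subtype, hS]
    refine tsum_congr fun z => ?_
    by_cases hz : z ∈ V <;> simp [hz, avoidProb]
  | succ m ih =>
    rw [tsum_pathMass_mul_avg hd (by decide : (1 : ℤ) ≠ -1) (avoidProb_nonneg V _),
      show n + 1 + (m + 1) = n + 1 + 1 + m by omega, ← ih, tsum_subtype (S (n + 1)) fun y =>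
        pathMass S init (n + 1) y * ENNReal.ofReal (avg (avoidProb V m) y), hS]
    refine tsum_congr fun z => ?_
    by_cases hz : z ∈ V <;> simp [hz, avoidProb]

theorem IsWalkLaw.measure_escEvent (hd : 0 < d) {μ : Measure (ℕ → Lat d)} {x : Lat d}
    (hμ : IsWalkLaw μ (pointInit x)) : (μ (escEvent V)).toReal = noReturnProb V x := by
  set S : ℕ → Set (Lat d) := fun n => if n = 0 then Set.univ else Vᶜ with hS
  set T : ℕ → Set (ℕ → Lat d) := fun m => {ω | ∀ k < m + 2, ω k ∈ S k} with hT
  have hμT (m : ℕ) : μ (T m) = ENNReal.ofReal (avg (avoidProb V m) x) := by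
    rw [hT, hμ.measure_forall_lt_succ, add_comm m 1, ← zero_add 1,
      ← tsum_pathMass_mul_avg_avoidProb hd (fun n => if_neg n.succ_ne_zero),
      tsum_eq_single ⟨x, by simp [hS]⟩]
    · simp [pathMass, pointInit]
    · rintro ⟨y, _⟩ hy
      simp [pathMass, pointInit, show y ≠ x from fun h => hy (Subtype.ext h)]
  have hesc : escEvent V = ⋂ m, T m := by
    ext ω
    simp only [escEvent, hT, Set.mem_ofPred_eq, Set.mem_iInter]
    refine ⟨fun h m k _ => ?_, fun h n hn => ?_⟩
    · obtain rfl | hk := Nat.eq_zero_or_pos k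
      · simp [hS]
      · simpa [hS, hk.ne'] using h k hk
    · simpa [hS, (Nat.one_le_iff_ne_zero.1 hn)] using h n n (by omega)
  have := hμ.1
  have hlim : Tendsto (fun m => μ (T m)) atTop (nhds (μ (escEvent V))) :=
    hesc ▸ tendsto_measure_iInter_atTop
      (fun m => (measurableSet_forall_lt_mem S (m + 2)).nullMeasurableSet)
      (fun m m' h ω hω k hk => hω k (by omega)) ⟨0, measure_ne_top _ _⟩
  refine tendsto_nhds_unique ((ENNReal.tendsto_toReal (measure_ne_top μ _)).comp hlim)
    ((tendsto_avg (tendsto_avoidProb hd) x).congr fun m => ?_)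
  rw [Function.comp_apply, hμT, ENNReal.toReal_ofReal (avg_nonneg (avoidProb_nonneg V m) x)]

theorem IsCap.eq_sum_noReturnProb (hd : 0 < d) (hV : V.Finite) {c : ℝ} (hc : IsCap d V c) :
    c = ∑ x ∈ hV.toFinset, noReturnProb V x := by
  obtain ⟨μ, hμ, rfl⟩ := hc
  rw [← finsum_mem_eq_finite_toFinset_sum _ hV]
  exact finsum_mem_congr rfl fun x _ => (hμ x).measure_escEvent hd

end Escape

/-! ### The entrance law and the Green function -/

section EntranceEvent

/-- The event that the first visit of the discrete path to `A` is at `x`. -/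
def entranceEvent {α : Type*} (A : Set α) (x : α) : Set (ℕ → α) :=
  {ω | ∃ n, (∀ k < n, ω k ∉ A) ∧ ω n = x}

variable {d : ℕ} {R : Type*} [AddGroupWithOne R] {A : Set (Fin d → R)} {σ : (Fin d → R) → ℝ}

theorem IsWalkLaw.measure_entranceEvent [MeasurableSpace R] [MeasurableSingletonClass R]
    [Countable R] {μ : Measure (ℕ → Fin d → R)} {init : (Fin d → R) → ℝ≥0∞}
    (hμ : IsWalkLaw μ init) {x : Fin d → R} (hx : x ∈ A) :
    μ (entranceEvent A x) = ∑' n, pathMass (fun _ => Aᶜ) init n x := by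
  have hU : entranceEvent A x = ⋃ n, {ω | (∀ k < n, ω k ∈ Aᶜ) ∧ ω n = x} :=
    Set.ofPred_exists _
  have hdisj : Pairwise (Function.onFun Disjoint
      fun n => {ω : ℕ → Fin d → R | (∀ k < n, ω k ∈ Aᶜ) ∧ ω n = x}) := by
    refine (pairwise_disjoint_on _).2 fun n m hnm => Set.disjoint_left.2 fun ω hn hm => ?_
    exact hm.1 n hnm (hn.2 ▸ hx)
  rw [hU, measure_iUnion hdisj fun n =>
    (measurableSet_forall_lt_mem _ n).inter (measurableSet_eval_eq n x)]
  exact tsum_congr fun n => hμ.measure_forall_lt_and_eq (fun _ => Aᶜ) n x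

theorem tsum_ofReal_mul_srwStep (hd : 0 < d) (hR : (1 : R) ≠ -1) (hσ : ∀ x, 0 ≤ σ x)
    (S : Set (Fin d → R)) (x : Fin d → R) :
    ∑' z : S, ENNReal.ofReal (σ z) * srwStep z.1 x = ENNReal.ofReal (avg (S.indicator σ) x) := by
  rw [← tsum_srwStep_mul_ofReal hd hR (Set.indicator_nonneg fun z _ => hσ z),
    tsum_subtype S fun z => ENNReal.ofReal (σ z) * srwStep z x]
  refine tsum_congr fun z => ?_
  by_cases hz : z ∈ S
  · rw [Set.indicator_of_mem hz, Set.indicator_of_mem hz, mul_comm, srwStep_comm]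
  · rw [Set.indicator_of_notMem hz, Set.indicator_of_notMem hz, ENNReal.ofReal_zero, mul_zero]

theorem pathMass_succ_ofReal (hd : 0 < d) (hR : (1 : R) ≠ -1) (hσ : ∀ x, 0 ≤ σ x) (n : ℕ)
    (x : Fin d → R) : pathMass (fun _ => Aᶜ) (fun x => ENNReal.ofReal (σ x)) (n + 1) x =
      ENNReal.ofReal (avg (killedMass A σ n) x) := by
  induction n generalizing x with
  | zero => exact tsum_ofReal_mul_srwStep hd hR hσ Aᶜ x
  | succ n ih =>
    rw [pathMass]
    simp_rw [ih]
    exact tsum_ofReal_mul_srwStep hd hR (avg_nonneg (killedMass_nonneg hσ n)) Aᶜ x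

theorem IsWalkLaw.tsum_eq_one [MeasurableSpace R] [MeasurableSingletonClass R] [Countable R]
    {μ : Measure (ℕ → Fin d → R)} {init : (Fin d → R) → ℝ≥0∞} (hμ : IsWalkLaw μ init) :
    ∑' x, init x = 1 := by
  have := hμ.1
  have h := hμ.measure_forall_lt_succ (fun _ => Set.univ) 0
  rw [tsum_univ (pathMass (fun _ => Set.univ) init 0)] at h
  exact h.symm.trans (by simp)

end EntranceEvent

section Torus

variable {d N : ℕ} {A : Set (Torus d N)} {σ : Torus d N → ℝ} {x : Torus d N}

theorem zmod_one_ne_neg_one (hN : 2 < N) : (1 : ZMod N) ≠ -1 :=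
  have : Fact (2 < N) := ⟨hN⟩
  ZMod.neg_one_ne_one.symm

theorem IsWalkLaw.measure_entranceEvent_ofReal (hd : 0 < d) (hN : 2 < N)
    (hσ : ∀ x, 0 ≤ σ x) {μ : Measure (ℕ → Torus d N)}
    (hμ : IsWalkLaw μ fun x => ENNReal.ofReal (σ x)) (hx : x ∈ A) :
    μ (entranceEvent A x) = ENNReal.ofReal (σ x + avg (green A σ) x) := by
  have : NeZero N := ⟨by omega⟩
  have hsum := hasSum_avg_killedMass ⟨x, hx⟩ hσ x
  have hnonneg := fun n => avg_nonneg (killedMass_nonneg (A := A) hσ n) x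
  rw [hμ.measure_entranceEvent hx, tsum_eq_zero_add' ENNReal.summable,
    ENNReal.ofReal_add (hσ x) (hsum.nonneg hnonneg), ← hsum.tsum_eq,
    ENNReal.ofReal_tsum_of_nonneg hnonneg hsum.summable]
  simp only [pathMass_succ_ofReal hd (zmod_one_ne_neg_one hN) hσ]
  rw [pathMass]

end Torus

section ContinuousTime

theorem IsIIDExp.ae_pos {ν : Measure (ℕ → ℝ)} (hν : IsIIDExp ν) : ∀ᵐ g ∂ν, ∀ k, 0 < g k := by
  have := hν.1
  rw [ae_all_iff]
  intro k
  have hall : ν {g | ∀ j ≤ k, 0 < g j} = 1 := by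
    simpa using hν.2 k 0 fun _ => le_rfl
  have hk : ν {g | 0 < g k} = 1 :=
    prob_le_one.antisymm (hall.ge.trans (measure_mono fun g hg => hg k le_rfl))
  exact (mem_ae_iff_prob_eq_one (measurableSet_lt measurable_const (measurable_pi_apply k))).2 hk

theorem strictMono_sum_range {g : ℕ → ℝ} (hg : ∀ k, 0 < g k) :
    StrictMono fun n => ∑ k ∈ Finset.range n, g k :=
  strictMono_nat_of_lt_succ fun n => by
    rw [Finset.sum_range_succ]
    exact lt_add_of_pos_right _ (hg n)

theorem nJumps_sum_range {g : ℕ → ℝ} (hg : ∀ k, 0 < g k) (n : ℕ) :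
    nJumps g (∑ k ∈ Finset.range n, g k) = n := by
  have : {m | ∑ k ∈ Finset.range m, g k ≤ ∑ k ∈ Finset.range n, g k} = Set.Iic n :=
    Set.ext fun m => (strictMono_sum_range hg).le_iff_le
  rw [nJumps, this, csSup_Iic]

theorem nJumps_lt {g : ℕ → ℝ} (hg : ∀ k, 0 < g k) {n : ℕ} {t : ℝ} (ht : 0 ≤ t)
    (htn : t < ∑ k ∈ Finset.range n, g k) : nJumps g t < n := by
  have hlt : ∀ m ∈ {m | ∑ k ∈ Finset.range m, g k ≤ t}, m < n := fun m hm =>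
    (strictMono_sum_range hg).lt_iff_lt.1 (lt_of_le_of_lt hm htn)
  exact hlt _ (Nat.sSup_mem ⟨0, by simpa using ht⟩ ⟨n, fun m hm => (hlt m hm).le⟩)

variable {d N : ℕ} {A : Set (Torus d N)} {σ : Torus d N → ℝ} {x : Torus d N} {ω : CTPath d N}

theorem ctPos_hitT_eq_of_forall_lt_notMem (hg : ∀ k, 0 < ω.2 k) {n : ℕ} (hlt : ∀ k < n, ω.1 k ∉ A)
    (hn : ω.1 n ∈ A) : ctPos ω (hitT A ω) = ω.1 n := by
  have hT : hitT A ω = ∑ k ∈ Finset.range n, ω.2 k := by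
    refine IsLeast.csInf_eq ⟨⟨Finset.sum_nonneg fun k _ => (hg k).le, ?_⟩, fun t ⟨ht0, ht⟩ => ?_⟩
    · rwa [ctPos, nJumps_sum_range hg]
    · by_contra! h
      exact hlt _ (nJumps_lt hg ht0 h) ht
  rw [hT, ctPos, nJumps_sum_range hg]

theorem ctPos_hitT_eq_iff (hx : x ∈ A) (hg : ∀ k, 0 < ω.2 k) :
    ctPos ω (hitT A ω) = x ↔ ω.1 ∈ entranceEvent A x := by
  constructor
  · rintro rfl
    have hA : ∃ n, ω.1 n ∈ A := ⟨_, hx⟩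
    have hlt : ∀ k < Nat.find hA, ω.1 k ∉ A := fun k => Nat.find_min hA
    exact ⟨Nat.find hA, hlt, (ctPos_hitT_eq_of_forall_lt_notMem hg hlt (Nat.find_spec hA)).symm⟩
  · rintro ⟨n, hlt, rfl⟩
    exact ctPos_hitT_eq_of_forall_lt_notMem hg hlt hx

theorem IsCTWalk.measure_ctPos_hitT_eq (hd : 0 < d) (hN : 2 < N) (hσ : ∀ x, 0 ≤ σ x)
    {P : Measure (CTPath d N)} (hP : IsCTWalk P fun x => ENNReal.ofReal (σ x)) (hx : x ∈ A) :
    P {ω | ctPos ω (hitT A ω) = x} = ENNReal.ofReal (σ x + avg (green A σ) x) := by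
  obtain ⟨μ, ν, hμ, hν, rfl⟩ := hP
  have := hν.1
  have hae : ({ω | ctPos ω (hitT A ω) = x} : Set (CTPath d N)) =ᵐ[μ.prod ν]
      (entranceEvent A x ×ˢ Set.univ : Set (CTPath d N)) := by
    filter_upwards [Measure.quasiMeasurePreserving_snd.ae hν.ae_pos] with ω hω
    exact propext ((ctPos_hitT_eq_iff hx hω).trans (and_iff_left trivial).symm)
  rw [measure_congr hae, Measure.prod_prod, measure_univ, mul_one,
    hμ.measure_entranceEvent_ofReal hd hN hσ hx]

end ContinuousTime

/-! ### Comparison with the equilibrium measure -/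

theorem abs_mul_sum_div_sub_one_le {ι : Type*} (s : Finset ι) {h e : ι → ℝ} {a ξ : ℝ} (ha : 0 ≤ a)
    (hξ0 : 0 ≤ ξ) (hξ : ξ ≤ 1 / 2) (hsum : ∑ x ∈ s, h x = 1)
    (hl : ∀ x ∈ s, a * (1 - ξ) * e x ≤ h x) (hu : ∀ x ∈ s, h x ≤ a * (1 + ξ) * e x)
    {x : ι} (hx : x ∈ s) (hex : 0 < e x) : |h x * (∑ y ∈ s, e y) / e x - 1| ≤ 4 * ξ := by
  set K := ∑ y ∈ s, e y with hK
  have hKl : a * (1 - ξ) * K ≤ 1 := by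
    rw [hK, Finset.mul_sum]
    exact (Finset.sum_le_sum hl).trans_eq hsum
  have hKu : 1 ≤ a * (1 + ξ) * K := by
    rw [hK, Finset.mul_sum]
    exact hsum.ge.trans (Finset.sum_le_sum hu)
  have hK0 : 0 ≤ K := by
    by_contra! hneg
    linarith [mul_nonpos_of_nonneg_of_nonpos (by positivity : 0 ≤ a * (1 + ξ)) hneg.le]
  have hratio_le : h x * K / e x ≤ a * (1 + ξ) * K := by
    rw [div_le_iff₀ hex]
    linarith [mul_le_mul_of_nonneg_right (hu x hx) hK0]
  have hle_ratio : a * (1 - ξ) * K ≤ h x * K / e x := by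
    rw [le_div_iff₀ hex]
    linarith [mul_le_mul_of_nonneg_right (hl x hx) hK0]
  have haK : a * K ≤ 2 := by linarith [mul_le_mul_of_nonneg_left hξ (mul_nonneg ha hK0)]
  have hξK := mul_le_mul_of_nonneg_left haK hξ0
  rw [abs_le]
  constructor <;> linarith

/-- Scales at which the walk on the torus of side `N`, started outside the ball of radius `R`, can
be compared with the walk on the lattice near the ball of radius `s`: the cube of radius
`5 * d * (2 * L + 1)`, on which Harnack's inequality is applied, fits into the ball of radius `R`,
which in turn embeds into the lattice. -/
structure AdmissibleScales (d N : ℕ) (s : ℝ) (ρ L : ℕ) (R : ℝ) : Prop where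
  nonneg : 0 ≤ s
  floor_le : ⌊s⌋₊ ≤ ρ
  succ_le : ρ + 1 ≤ L
  le_floor : 5 * d * (2 * L + 1) ≤ ⌊R⌋₊
  two_mul_lt : 2 * (⌊R⌋₊ + 1) < N

section Estimate

variable {d N ρ L : ℕ} {s R : ℝ}

namespace AdmissibleScales

theorem nonneg_right (hd : 0 < d) (h : AdmissibleScales d N s ρ L R) : 0 ≤ R := by
  by_contra! hR
  have := h.le_floor
  rw [Nat.floor_of_nonpos hR.le] at this
  exact this.not_gt (by positivity)

theorem floor_le_floor (hd : 0 < d) (h : AdmissibleScales d N s ρ L R) : ⌊s⌋₊ ≤ ⌊R⌋₊ := by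
  have := Nat.le_mul_of_pos_left (2 * L + 1) (by positivity : 0 < 5 * d)
  linarith [h.floor_le, h.succ_le, h.le_floor]

theorem torusBall_subset [NeZero N] (hd : 0 < d) (h : AdmissibleScales d N s ρ L R) :
    torusBall (0 : Torus d N) s ⊆ torusBall 0 R := fun x hx =>
  (mem_torusBall_zero_iff (h.nonneg_right hd) x).2
    (cube_mono (h.floor_le_floor hd) ((mem_torusBall_zero_iff h.nonneg x).1 hx))

end AdmissibleScales

theorem isHarmonicOn_green_comp_proj [NeZero N] {A : Set (Torus d N)} {σ : Torus d N → ℝ}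
    (hA : A.Nonempty) (hσ : ∀ x, 0 ≤ σ x) {D : Set (Lat d)} (hDA : ∀ y ∈ D, proj N y ∉ A)
    (hDσ : ∀ y ∈ D, σ (proj N y) = 0) : IsHarmonicOn (fun y => green A σ (proj N y)) D := by
  intro y hy
  dsimp only
  rw [avg_comp_proj, green_of_notMem hA hσ (hDA y hy), hDσ y hy, zero_add]

theorem exists_avg_green_comparison (hd : 3 ≤ d) : ∃ C : ℝ, 0 < C ∧ ∀ (N ρ L : ℕ) (s R : ℝ),
    AdmissibleScales d N s ρ L R → C * comparisonError d ⌊s⌋₊ ρ L ≤ 1 / 2 →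
    ∀ σ : Torus d N → ℝ, (∀ x, 0 ≤ σ x) → (∀ x ∈ torusBall (0 : Torus d N) R, σ x = 0) →
    ∃ a : ℝ, 0 ≤ a ∧ ∀ y ∈ cube d ⌊s⌋₊,
      a * (1 - C * comparisonError d ⌊s⌋₊ ρ L) * noReturnProb (cube d ⌊s⌋₊) y ≤
        avg (green (torusBall 0 s) σ) (proj N y) ∧
      avg (green (torusBall 0 s) σ) (proj N y) ≤
        a * (1 + C * comparisonError d ⌊s⌋₊ ρ L) * noReturnProb (cube d ⌊s⌋₊) y := by
  obtain ⟨C, hC, local_comparison⟩ := exists_local_comparison hd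
  refine ⟨C, hC, fun N ρ L s R h hξ σ hσ hσR => ?_⟩
  have hd0 : 0 < d := by omega
  have hR := h.nonneg_right hd0
  have hN := h.two_mul_lt
  have : NeZero N := ⟨by omega⟩
  have hgreen : ∀ x, 0 ≤ green (torusBall 0 s) σ x := green_nonneg hσ
  have hmem {y : Lat d} (hy : y ∈ cube d ⌊R⌋₊) :
      proj N y ∈ torusBall 0 s ↔ y ∈ cube d ⌊s⌋₊ :=
    proj_mem_torusBall_zero_iff h.nonneg (by omega) hy
  have hcube := cube_mono (d := d) h.le_floor
  have harmonic : IsHarmonicOn (fun y => green (torusBall 0 s) σ (proj N y))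
      (cube d (5 * d * (2 * L + 1)) \ cube d ⌊s⌋₊) :=
    isHarmonicOn_green_comp_proj ⟨0, zero_mem_torusBall_zero h.nonneg⟩ hσ
      (fun y hy hyA => hy.2 ((hmem (hcube hy.1)).1 hyA)) fun y hy =>
        hσR _ ((proj_mem_torusBall_zero_iff hR (by omega) (hcube hy.1)).2 (hcube hy.1))
  simp only [← avg_comp_proj]
  exact local_comparison _ ρ L h.floor_le h.succ_le hξ _ (∑ x, green (torusBall 0 s) σ x)
    (fun y => ⟨hgreen _, Finset.single_le_sum (fun x _ => hgreen x) (Finset.mem_univ _)⟩)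
    (fun y hy => green_of_mem ((hmem (cube_mono (h.floor_le_floor hd0) hy)).2 hy)) harmonic

theorem sum_cube_avg_green [NeZero N] (hd : 0 < d) (hs : 0 ≤ s) (hN : 2 * ⌊s⌋₊ < N)
    {σ : Torus d N → ℝ} (hσ : ∀ x, 0 ≤ σ x) (hσs : ∀ x ∈ torusBall (0 : Torus d N) s, σ x = 0) :
    ∑ y ∈ (finite_cube (d := d) ⌊s⌋₊).toFinset, avg (green (torusBall 0 s) σ) (proj N y) =
      ∑ x, σ x := by
  rw [sum_cube_comp_proj hs hN, sum_avg_green hd ⟨0, zero_mem_torusBall_zero hs⟩ hσ]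
  exact Finset.sum_filter_of_ne fun x _ hx hxs => hx (hσs x hxs)

theorem IsCTWalk.tsum_eq_one [NeZero N] {init : Torus d N → ℝ≥0∞} {P : Measure (CTPath d N)}
    (hP : IsCTWalk P init) : ∑' x, init x = 1 :=
  let ⟨_, _, hμ, _⟩ := hP
  hμ.tsum_eq_one

theorem IsCTWalk.exists_ofReal_eq [NeZero N] {init : Torus d N → ℝ≥0∞} {P : Measure (CTPath d N)}
    (hP : IsCTWalk P init) : ∃ σ : Torus d N → ℝ, (∀ x, 0 ≤ σ x) ∧ ∑ x, σ x = 1 ∧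
      (fun x => ENNReal.ofReal (σ x)) = init := by
  have hsum := hP.tsum_eq_one
  have hfin (x : Torus d N) : init x ≠ ∞ :=
    ENNReal.ne_top_of_tsum_ne_top (hsum.trans_ne ENNReal.one_ne_top) x
  refine ⟨fun x => (init x).toReal, fun x => ENNReal.toReal_nonneg, ?_,
    funext fun x => ENNReal.ofReal_toReal (hfin x)⟩
  rw [← ENNReal.toReal_sum fun x _ => hfin x, ← tsum_fintype (L := .unconditional _), hsum,
    ENNReal.toReal_one]

theorem exists_entrance_estimate (hd : 3 ≤ d) : ∃ C : ℝ, 0 < C ∧ ∀ (N ρ L : ℕ) (s R : ℝ),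
    AdmissibleScales d N s ρ L R → C * comparisonError d ⌊s⌋₊ ρ L ≤ 1 / 2 →
    ∀ init : Torus d N → ℝ≥0∞, (∀ x ∈ torusBall (0 : Torus d N) R, init x = 0) →
    ∀ P : Measure (CTPath d N), IsCTWalk P init →
    ∀ c : ℝ, IsCap d (torusToLat '' torusBall (0 : Torus d N) s) c →
    ∀ x ∈ intBdry adj (torusBall (0 : Torus d N) s),
    ∀ μ : Measure (ℕ → Lat d), IsWalkLaw μ (pointInit (torusToLat x)) →
    |(P {ω | ctPos ω (hitT (torusBall (0 : Torus d N) s) ω) = x}).toReal * c /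
      (μ (escEvent (torusToLat '' torusBall (0 : Torus d N) s))).toReal - 1| ≤
      4 * (C * comparisonError d ⌊s⌋₊ ρ L) := by
  obtain ⟨C, hC, green_comparison⟩ := exists_avg_green_comparison hd
  refine ⟨C, hC, fun N ρ L s R h hξ init hinit P hP c hc x hx μ hμ => ?_⟩
  have hd0 : 0 < d := by omega
  have hN := h.two_mul_lt
  have hsR := h.floor_le_floor hd0
  have : NeZero N := ⟨by omega⟩
  obtain ⟨σ, hσ, hσ1, rfl⟩ := hP.exists_ofReal_eq
  have hσR : ∀ x ∈ torusBall (0 : Torus d N) R, σ x = 0 := fun x hx =>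
    (ENNReal.ofReal_eq_zero.1 (hinit x hx)).antisymm (hσ x)
  have hσs := fun x hx => hσR x (h.torusBall_subset hd0 hx)
  obtain ⟨a, ha, hcomp⟩ := green_comparison N ρ L s R h hξ σ hσ hσR
  have total_mass : ∑ y ∈ (finite_cube (d := d) ⌊s⌋₊).toFinset,
      avg (green (torusBall 0 s) σ) (proj N y) = 1 :=
    (sum_cube_avg_green hd0 h.nonneg (by omega) hσ hσs).trans hσ1
  have hentrance : (P {ω | ctPos ω (hitT (torusBall 0 s) ω) = x}).toReal =
      avg (green (torusBall 0 s) σ) (proj N (torusToLat x)) := by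
    rw [hP.measure_ctPos_hitT_eq hd0 (by omega) hσ hx.1, hσs x hx.1, zero_add, proj_torusToLat,
      ENNReal.toReal_ofReal (avg_nonneg (green_nonneg hσ) x)]
  rw [torusToLat_image_torusBall_zero h.nonneg (by omega)] at hc ⊢
  rw [hentrance, hμ.measure_escEvent hd0, hc.eq_sum_noReturnProb hd0 (finite_cube _)]
  refine abs_mul_sum_div_sub_one_le _ (h := fun y => avg (green _ σ) (proj N y)) ha
    (mul_nonneg hC.le (comparisonError_nonneg _ _ _ _)) hξ total_mass
    (fun y hy => (hcomp y ((Set.Finite.mem_toFinset _).1 hy)).1)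
    (fun y hy => (hcomp y ((Set.Finite.mem_toFinset _).1 hy)).2) ?_
    (noReturnProb_cube_pos hd (torusToLat_mem_intBdry_cube h.nonneg (by omega) hx))
  exact (Set.Finite.mem_toFinset _).2 ((mem_torusBall_zero_iff h.nonneg x).1 hx.1)

end Estimate

section Scales

variable {d N : ℕ} {ε s : ℝ}

theorem rpow_sq_rpow {n : ℝ} (hn : 0 ≤ n) (x y : ℝ) : ((n ^ x) ^ 2) ^ y = n ^ (2 * x * y) := by
  rw [← Real.rpow_natCast, ← Real.rpow_mul hn, ← Real.rpow_mul hn]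
  congr 1
  push_cast
  ring

theorem inv_decayMin_le {r : ℕ} {m : ℝ} (hm : 1 ≤ m) (hrm : r ≤ m) :
    (decayMin d r)⁻¹ ≤ (d + 2000) * (m ^ 2) ^ (1 / 4 : ℝ) := by
  have hd : (0 : ℝ) ≤ d := d.cast_nonneg
  have hle : d * (r : ℝ) ^ 2 + 2000 ≤ (d + 2000) * m ^ 2 := by
    have hsq : (r : ℝ) ^ 2 ≤ m ^ 2 := by gcongr
    linarith [mul_le_mul_of_nonneg_left hsq hd, one_le_pow₀ hm (n := 2)]
  rw [decayMin, Real.rpow_neg (by positivity), inv_inv]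
  refine (Real.rpow_le_rpow (by positivity) hle (by norm_num)).trans ?_
  rw [Real.mul_rpow (by positivity) (by positivity)]
  gcongr
  exact Real.rpow_le_self_of_one_le (by linarith) (by norm_num)

theorem decayRatio_le_rpow (d : ℕ) {n : ℝ} (hε : ε ≤ 1) (hn : 1 ≤ n) (hs : 0 ≤ s)
    (hsn : s ≤ n ^ (1 - ε)) :
    decayRatio d ⌊s⌋₊ ⌊n ^ (1 - 3 * ε / 4)⌋₊ ≤ (d + 2000) * n ^ (-(ε / 8)) := by
  have hn0 : 0 < n := by linarith
  have hnum : (((⌊n ^ (1 - 3 * ε / 4)⌋₊ : ℝ) + 1) ^ 2) ^ (-(1 / 4) : ℝ) ≤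
      n ^ (-(1 / 2) + 3 * ε / 8) := by
    have hsq : (n ^ (1 - 3 * ε / 4)) ^ 2 ≤ ((⌊n ^ (1 - 3 * ε / 4)⌋₊ : ℝ) + 1) ^ 2 := by
      gcongr
      exact (Nat.lt_floor_add_one _).le
    refine (Real.rpow_le_rpow_of_nonpos (by positivity) hsq (by norm_num)).trans_eq ?_
    rw [rpow_sq_rpow hn0.le]
    congr 1
    ring
  have hden : (decayMin d ⌊s⌋₊)⁻¹ ≤ (d + 2000) * n ^ (1 / 2 - ε / 2) := by
    refine (inv_decayMin_le (Real.one_le_rpow hn (by linarith))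
      ((Nat.floor_le hs).trans hsn)).trans_eq ?_
    rw [rpow_sq_rpow hn0.le]
    congr 2
    ring
  calc decayRatio d ⌊s⌋₊ ⌊n ^ (1 - 3 * ε / 4)⌋₊
      ≤ n ^ (-(1 / 2) + 3 * ε / 8) * ((d + 2000) * n ^ (1 / 2 - ε / 2)) := by
        rw [decayRatio, div_eq_mul_inv]
        exact mul_le_mul hnum hden (inv_nonneg.2 (decayMin_pos _ _).le) (by positivity)
    _ = (d + 2000) * (n ^ (-(1 / 2) + 3 * ε / 8) * n ^ (1 / 2 - ε / 2)) := by ring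
    _ = (d + 2000) * n ^ (-(ε / 8)) := by
      rw [← Real.rpow_add hn0]
      congr 2
      ring

theorem admissibleScales_of_le (hd : 0 < d) {a b : ℝ} (hs : 0 ≤ s) (hsa : s ≤ a) (ha : 1 ≤ a)
    (hab : 60 * d * a ≤ b) (hbN : 180 * b ≤ N) :
    AdmissibleScales d N s ⌊a⌋₊ ⌊b / (20 * d)⌋₊ b := by
  have hd1 : (1 : ℝ) ≤ d := by exact_mod_cast hd
  have hda : (d : ℝ) ≤ d * a := le_mul_of_one_le_right (by positivity) ha
  have hL : (⌊b / (20 * d)⌋₊ : ℝ) * (20 * d) ≤ b :=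
    (le_div_iff₀ (by positivity)).1 (Nat.floor_le (div_nonneg (by linarith) (by positivity)))
  refine ⟨hs, Nat.floor_mono hsa, Nat.le_floor ?_, Nat.le_floor ?_, ?_⟩
  · rw [le_div_iff₀ (by positivity)]
    push_cast
    nlinarith [mul_le_mul_of_nonneg_left (Nat.floor_le (by linarith : 0 ≤ a)) d.cast_nonneg]
  · push_cast
    linarith
  · rw [← Nat.cast_lt (α := ℝ)]
    push_cast
    linarith [Nat.floor_le (by linarith : 0 ≤ b)]

theorem floor_succ_div_floor_succ_le (hd : 0 < d) {a b : ℝ} (ha : 1 ≤ a) (hb : 0 < b) :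
    ((⌊a⌋₊ : ℝ) + 1) / (⌊b / (20 * d)⌋₊ + 1) ≤ 40 * d * (a / b) :=
  calc ((⌊a⌋₊ : ℝ) + 1) / (⌊b / (20 * d)⌋₊ + 1) ≤ 2 * a / (b / (20 * d)) := by
        gcongr
        · linarith [Nat.floor_le (by linarith : 0 ≤ a)]
        · exact (Nat.lt_floor_add_one _).le
    _ = 40 * d * (a / b) := by
      rw [div_div_eq_mul_div]
      ring

theorem exists_admissibleScales (hd : 0 < d) (hε0 : 0 ≤ ε) (hε1 : ε ≤ 1) (hN : 1 ≤ N)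
    (hlarge : 180 * d ≤ (N : ℝ) ^ (ε / 4)) (hs : 0 ≤ s) (hsN : s ≤ (N : ℝ) ^ (1 - ε)) :
    ∃ ρ L : ℕ, AdmissibleScales d N s ρ L ((N : ℝ) ^ (1 - ε / 2)) ∧
      comparisonError d ⌊s⌋₊ ρ L ≤ (41 * d + 2000) * (N : ℝ) ^ (-(ε / 8)) := by
  have hn : (1 : ℝ) ≤ N := Nat.one_le_cast.2 hN
  have hn0 : (0 : ℝ) < N := by linarith
  have hd1 : (1 : ℝ) ≤ d := by exact_mod_cast hd
  set n : ℝ := (N : ℝ)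
  set a := n ^ (1 - 3 * ε / 4) with ha
  set b := n ^ (1 - ε / 2) with hb
  have ha1 : 1 ≤ a := Real.one_le_rpow hn (by linarith)
  have hb0 : 0 < b := Real.rpow_pos_of_pos hn0 _
  have hab : n ^ (ε / 4) * a = b := by
    rw [ha, hb, ← Real.rpow_add hn0]
    congr 1
    ring
  have hbn : n ^ (ε / 2) * b = n := by
    rw [hb, ← Real.rpow_add hn0, add_sub_cancel, Real.rpow_one]
  have hpow : n ^ (ε / 4) ≤ n ^ (ε / 2) := Real.rpow_le_rpow_of_exponent_le hn (by linarith)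
  refine ⟨⌊a⌋₊, ⌊b / (20 * d)⌋₊, admissibleScales_of_le hd hs
    (hsN.trans (Real.rpow_le_rpow_of_exponent_le hn (by linarith))) ha1
    ((mul_le_mul_of_nonneg_right (by linarith) (by linarith)).trans_eq hab)
    ((mul_le_mul_of_nonneg_right (by linarith) hb0.le).trans_eq hbn), ?_⟩
  have hratio : a / b ≤ n ^ (-(ε / 8)) := by
    rw [ha, hb, ← Real.rpow_sub hn0]
    exact Real.rpow_le_rpow_of_exponent_le hn (by linarith)
  calc comparisonError d ⌊s⌋₊ ⌊a⌋₊ ⌊b / (20 * d)⌋₊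
      ≤ (d + 2000) * n ^ (-(ε / 8)) + 40 * d * n ^ (-(ε / 8)) :=
        add_le_add (decayRatio_le_rpow d hε1 hn hs hsN)
          ((floor_succ_div_floor_succ_le hd ha1 hb0).trans (by gcongr))
    _ = (41 * d + 2000) * n ^ (-(ε / 8)) := by ring

theorem eventually_le_natCast_rpow (K : ℝ) {α : ℝ} (hα : 0 < α) :
    ∀ᶠ N : ℕ in atTop, K ≤ (N : ℝ) ^ α :=
  ((tendsto_rpow_atTop hα).comp tendsto_natCast_atTop_atTop).eventually_ge_atTop K

end Scales

theorem entrance_law_equilibrium_general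
    (d : ℕ) (hd : 3 ≤ d) (ε : ℝ) (hε : 0 < ε ∧ ε < 1) :
    ∃ c c' : ℝ, 0 < c ∧ 0 < c' ∧ ∃ N₀ : ℕ, ∀ N : ℕ, N₀ ≤ N →
      ∀ rN : ℝ, rN ≤ (N : ℝ) ^ (1 - ε) →
        ∀ init : Torus d N → ℝ≥0∞,
          (∀ x ∈ torusBall (0 : Torus d N) ((N : ℝ) ^ (1 - ε / 2)), init x = 0) →
          ∀ P : Measure (CTPath d N), IsCTWalk P init →
            ∀ r : ℝ, IsCap d (torusToLat '' torusBall (0 : Torus d N) rN) r →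
              ∀ x ∈ intBdry adj (torusBall (0 : Torus d N) rN),
                ∀ μx : Measure (ℕ → Lat d), IsWalkLaw μx (pointInit (torusToLat x)) →
                  |(P {ω | ctPos ω (hitT (torusBall (0 : Torus d N) rN) ω) = x}).toReal * r /
                      (μx (escEvent (torusToLat '' torusBall (0 : Torus d N) rN))).toReal -
                    1| ≤ c * (N : ℝ) ^ (-c') := by
  obtain ⟨C, hC, entrance_estimate⟩ := exists_entrance_estimate hd
  set K : ℝ := C * (41 * d + 2000) with hK
  obtain ⟨N₀, hN₀⟩ := eventually_atTop.1 <|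
    (eventually_le_natCast_rpow (180 * d) (by linarith [hε.1] : 0 < ε / 4)).and <|
    (eventually_le_natCast_rpow (2 * K) (by linarith [hε.1] : 0 < ε / 8)).and
      (eventually_ge_atTop 1)
  refine ⟨4 * K, ε / 8, by positivity, by linarith [hε.1], N₀, ?_⟩
  intro N hN rN hrN init hinit P hP r hr x hx μx hμx
  obtain ⟨hscale, hsmall, hN1⟩ := hN₀ N hN
  obtain ⟨ρ, L, hρL, herror⟩ := exists_admissibleScales (by omega) hε.1.le hε.2.le hN1 hscale
    ((Nat.cast_nonneg _).trans hx.1) hrN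
  have hbound : C * comparisonError d ⌊rN⌋₊ ρ L ≤ K * (N : ℝ) ^ (-(ε / 8)) := by
    rw [hK, mul_assoc]
    gcongr
  have hhalf : K * (N : ℝ) ^ (-(ε / 8)) ≤ 1 / 2 := by
    rw [Real.rpow_neg N.cast_nonneg, ← div_eq_mul_inv,
      div_le_iff₀ (Real.rpow_pos_of_pos (by positivity) _)]
    linarith
  refine (entrance_estimate N ρ L rN _ hρL (hbound.trans hhalf) init hinit P hP r hr x hx μx
    hμx).trans ?_
  linarith

/-- **Lemma (entrance law from the quasistationary distribution).**
With `A = B(0,r_N) ⊆ B = B(0,N^{1−ε/2})`, for all large `N`: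
`sup_{x ∈ ∂_i A} | P_σ[Y_{H_A} = x] · cap(𝖠) / e_A(x) − 1 | ≤ c N^{−c'}`,
where `σ` is the quasistationary distribution on `T ∖ B`, `𝖠 = φ(A)` and
`e_A(x) = e_𝖠(φ(x))` is the equilibrium measure. -/
theorem entrance_law_equilibrium
    (d : ℕ) (hd : 3 ≤ d) (ε : ℝ) (hε : 0 < ε ∧ ε < 1) :
    ∃ c c' : ℝ, 0 < c ∧ 0 < c' ∧ ∃ N₀ : ℕ, ∀ N : ℕ, N₀ ≤ N →
      ∀ rN : ℝ, 1 ≤ rN → rN ≤ (N : ℝ) ^ (1 - ε) →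
        ∀ σ : Torus d N → ℝ,
          IsQSD d N (torusBall (0 : Torus d N) ((N : ℝ) ^ (1 - ε / 2))) σ →
          ∀ Pσ : Measure (CTPath d N),
            IsCTWalk Pσ (fun z => ENNReal.ofReal (σ z)) →
            ∀ r : ℝ, IsCap d (torusToLat '' torusBall (0 : Torus d N) rN) r →
              ∀ x ∈ intBdry adj (torusBall (0 : Torus d N) rN),
                ∀ μx : Measure (ℕ → Lat d), IsWalkLaw μx (pointInit (torusToLat x)) →
                  |(Pσ {ω | ctPos ω (hitT (torusBall (0 : Torus d N) rN) ω) = x}).toReal * r /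
                      (μx (escEvent (torusToLat '' torusBall (0 : Torus d N) rN))).toReal -
                    1| ≤ c * (N : ℝ) ^ (-c') := by
  obtain ⟨c, c', hc, hc', N₀, h⟩ := entrance_law_equilibrium_general d hd ε hε
  exact ⟨c, c', hc, hc', N₀, fun N hN rN _ hrN σ hσ Pσ hPσ =>
    h N hN rN hrN _ (fun x hx => by rw [hσ.2.1 x hx, ENNReal.ofReal_zero]) Pσ hPσ⟩

end Frag
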